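/- Let a ∈ L¹(ℝ₊)^{p×p}, b ∈ L¹(ℝ₊)^{p×q}, c ∈ L¹(ℝ₋)^{q×p}, d ∈ L¹(ℝ₋)^{q×q}. Assume condition (L1) holds, i.e. a* + a + a*⋆a − c*⋆c = 0, d* + d + d*⋆d − b*⋆b = 0 and b + a*⋆b = c* + c*⋆d, and assume the operators M₁₁ and M₂₂ are injective. Then M₁₁ and M₂₂ are invertible, the twofold Ellis–Gohberg inverse problem for {a,b,c,d} has a unique solution g ∈ L¹(ℝ₊)^{p×q}, and this solution satisfies g = −M₁₁⁻¹b and g* = −M₂₂⁻¹c (the operators being applied columnwise to the matrix functions b and c). -/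

import Mathlib

/-!
The Fourier transform turns the convolution algebra into a commutative ring of functions with the
involution `*`, in which the images `P` of `L¹(ℝ₊)` and `M` of `L¹(ℝ₋)` are subrings with trivial
intersection, exchanged by `*`. Condition (L1) says that the block matrix `Θ` with rows `(α, β)`
and `(γ, δ)` is `J`-unitary on one side; a one-sided inverse of a square matrix over a commutative
ring is two-sided, so `αα* - ββ* = 1`, `αγ* = βδ*` and `δδ* - γγ* = 1` as well
(`EGData.transposed`).

*Invertibility.* Since `αα* - ββ* = 1`, the operator `M₁₁` is the identity plus a combination of
products of Hankel operators (`eq_one_add_hankMul`). Hankel operators with `L¹` symbols are compact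
(`isCompactOperator_hankel`): exponentials `e^{-kt}` have rank-one Hankel operators and, by the
Weierstrass theorem in the variable `e^{-t}`, their span is dense in `L¹(ℝ₊)`. Hence an injective
`M₁₁` is invertible, by the Fredholm alternative, and the same holds for `M₂₂`.

*Formulas and uniqueness.* For a solution `g`, the second and third inclusions say that the
components in `P` of `α* g` and `β* g` are `-γ*` and `1 - δ*`, so that
`M₁₁ g = -αγ* - β(1 - δ*) = -β` (`EGData.mrel_of_sol`). By the symmetry exchanging `ℝ₊` with
`ℝ₋`, also `M₂₂ g* = -γ`.

*Existence.* Let `M₁₁ g = -b` and `M₂₂ k = -c`. The failure of the second and third inclusions for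
`g` is measured by elements `z₁, z₂` of `P` with `α z₁ = β z₂`, and `w = γ z₁ - δ z₂` lies in `M`
and in the kernel of `M₂₂`. Injectivity gives `w = 0`, hence `z₁ = z₂ = 0`
(`EGData.sol_of_mrel`). Symmetrically `k*` satisfies the first and fourth inclusions. Finally the
`J`-unitarity of `Θ` forces `g = k*` (`EGData.eq_of_halves`), so `g` satisfies all four.
-/

open MeasureTheory Set Matrix
open scoped ComplexConjugate

noncomputable section

abbrev MatF (r s : ℕ) := ℝ → Matrix (Fin r) (Fin s) ℂ

def conv {r s u : ℕ} (f : MatF r s) (h : MatF s u) : MatF r u :=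
  fun t => Matrix.of fun i j => ∫ τ : ℝ, (f (t - τ) * h τ) i j

def adjF {r s : ℕ} (f : MatF r s) : MatF s r := fun t => (f (-t))ᴴ

def L1Plus {r s : ℕ} (f : MatF r s) : Prop :=
  (∀ i j, Integrable fun t => f t i j) ∧ ∀ t < (0:ℝ), f t = 0

def L1Minus {r s : ℕ} (f : MatF r s) : Prop :=
  (∀ i j, Integrable fun t => f t i j) ∧ ∀ t > (0:ℝ), f t = 0

def μP : Measure ℝ := volume.restrict (Ici 0)
def μM : Measure ℝ := volume.restrict (Iic 0)

abbrev L1P (n : ℕ) := Lp (Fin n → ℂ) 1 μP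
abbrev L1M (n : ℕ) := Lp (Fin n → ℂ) 1 μM

def IsHP {k m : ℕ} (r : MatF k m) (H : L1M m →L[ℂ] L1P k) : Prop :=
  ∀ f : L1M m, ⇑(H f) =ᵐ[μP] fun t => ∫ s, (r (t - s)).mulVec (f s) ∂μM

def IsHM {k m : ℕ} (r : MatF k m) (H : L1P m →L[ℂ] L1M k) : Prop :=
  ∀ f : L1P m, ⇑(H f) =ᵐ[μM] fun t => ∫ s, (r (t - s)).mulVec (f s) ∂μP

def IsTP {k m : ℕ} (r₀ : Matrix (Fin k) (Fin m) ℂ) (r : MatF k m)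
    (T : L1P m →L[ℂ] L1P k) : Prop :=
  ∀ f : L1P m, ⇑(T f) =ᵐ[μP] fun t => r₀.mulVec (f t) + ∫ s, (r (t - s)).mulVec (f s) ∂μP

def IsTM {k m : ℕ} (r₀ : Matrix (Fin k) (Fin m) ℂ) (r : MatF k m)
    (T : L1M m →L[ℂ] L1M k) : Prop :=
  ∀ f : L1M m, ⇑(T f) =ᵐ[μM] fun t => r₀.mulVec (f t) + ∫ s, (r (t - s)).mulVec (f s) ∂μM

def blockCLM {X Y Z W : Type*} [NormedAddCommGroup X] [NormedSpace ℂ X]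
    [NormedAddCommGroup Y] [NormedSpace ℂ Y] [NormedAddCommGroup Z] [NormedSpace ℂ Z]
    [NormedAddCommGroup W] [NormedSpace ℂ W]
    (A : X →L[ℂ] Z) (B : Y →L[ℂ] Z) (C : X →L[ℂ] W) (D : Y →L[ℂ] W) :
    (X × Y) →L[ℂ] (Z × W) :=
  (A.comp (ContinuousLinearMap.fst ℂ X Y) + B.comp (ContinuousLinearMap.snd ℂ X Y)).prod
    (C.comp (ContinuousLinearMap.fst ℂ X Y) + D.comp (ContinuousLinearMap.snd ℂ X Y))

def InvertibleCLM {X Y : Type*} [NormedAddCommGroup X] [NormedSpace ℂ X]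
    [NormedAddCommGroup Y] [NormedSpace ℂ Y] (T : X →L[ℂ] Y) : Prop :=
  ∃ S : Y →L[ℂ] X, S.comp T = ContinuousLinearMap.id ℂ X ∧ T.comp S = ContinuousLinearMap.id ℂ Y

def AeZeroPos {r s : ℕ} (f : MatF r s) : Prop := ∀ᵐ t : ℝ, 0 < t → f t = 0
def AeZeroNeg {r s : ℕ} (f : MatF r s) : Prop := ∀ᵐ t : ℝ, t < 0 → f t = 0

def EGSol {p q : ℕ} (a : MatF p p) (b : MatF p q) (c : MatF q p) (d : MatF q q)
    (g : MatF p q) : Prop :=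
  AeZeroPos (fun t => a t + conv g c t) ∧
  AeZeroNeg (fun t => adjF g t + conv (adjF g) a t + c t) ∧
  AeZeroNeg (fun t => d t + conv (adjF g) b t) ∧
  AeZeroPos (fun t => g t + conv g d t + b t)


def colF {r s : ℕ} (f : MatF r s) (j : Fin s) : ℝ → Fin r → ℂ := fun t i => f t i j

/-- Condition (L1): `α*⋄α − γ*⋄γ = e_p`, `δ*⋄δ − β*⋄β = e_q`, `α*⋄β = γ*⋄δ`,
written out in terms of the data `a,b,c,d`. -/
def CondL1 {p q : ℕ} (a : MatF p p) (b : MatF p q) (c : MatF q p) (d : MatF q q) : Prop :=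
  (∀ᵐ t ∂(volume : Measure ℝ), adjF a t + a t + conv (adjF a) a t - conv (adjF c) c t = 0) ∧
  (∀ᵐ t ∂(volume : Measure ℝ), adjF d t + d t + conv (adjF d) d t - conv (adjF b) b t = 0) ∧
  (∀ᵐ t ∂(volume : Measure ℝ), b t + conv (adjF a) b t = adjF c t + conv (adjF c) d t)

/-- The transposed identities (conditions (C4)--(C6) in the `L¹` setting). -/
def CondL1T {p q : ℕ} (a : MatF p p) (b : MatF p q) (c : MatF q p) (d : MatF q q) : Prop :=
  (∀ᵐ t ∂(volume : Measure ℝ), a t + adjF a t + conv a (adjF a) t - conv b (adjF b) t = 0) ∧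
  (∀ᵐ t ∂(volume : Measure ℝ), d t + adjF d t + conv d (adjF d) t - conv c (adjF c) t = 0) ∧
  (∀ᵐ t ∂(volume : Measure ℝ), adjF c t + conv a (adjF c) t = b t + conv b (adjF d) t)


/-! ### Algebra in a commutative star ring with two complementary subrings -/

section Algebra

variable {A : Type*} [CommRing A]

/-- All entries of the matrix `X` lie in the subring `S`. -/
def EntriesIn {m n : Type*} (S : NonUnitalSubring A) (X : Matrix m n A) : Prop :=
  ∀ i j, X i j ∈ S

section EntriesIn

variable {m n k : Type*} {S : NonUnitalSubring A}

lemma EntriesIn.zero : EntriesIn S (0 : Matrix m n A) := fun _ _ => S.zero_mem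

lemma EntriesIn.add {X Y : Matrix m n A} (hX : EntriesIn S X) (hY : EntriesIn S Y) :
    EntriesIn S (X + Y) := fun i j => S.add_mem (hX i j) (hY i j)

lemma EntriesIn.sub {X Y : Matrix m n A} (hX : EntriesIn S X) (hY : EntriesIn S Y) :
    EntriesIn S (X - Y) := fun i j => S.sub_mem (hX i j) (hY i j)

lemma EntriesIn.neg {X : Matrix m n A} (hX : EntriesIn S X) : EntriesIn S (-X) :=
  fun i j => S.neg_mem (hX i j)

lemma EntriesIn.mul [Fintype n] {X : Matrix m n A} {Y : Matrix n k A}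
    (hX : EntriesIn S X) (hY : EntriesIn S Y) : EntriesIn S (X * Y) := fun i j => by
  rw [Matrix.mul_apply]
  exact sum_mem fun l _ => S.mul_mem (hX i l) (hY l j)

end EntriesIn

/-- The `j`-th column of a matrix. -/
def colM {m n : Type*} (X : Matrix m n A) (j : n) : Matrix m Unit A := X.submatrix id fun _ => j

lemma colM_mul {m n k : Type*} [Fintype n] (X : Matrix m n A) (Y : Matrix n k A) (j : k) :
    colM (X * Y) j = X * colM Y j := by
  ext i l
  simp [colM, Matrix.mul_apply]

lemma colM_ext {R m n : Type*} {X Y : Matrix m n R} (h : ∀ j, colM X j = colM Y j) : X = Y := by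
  ext i j
  exact congrFun (congrFun (h j) i) ()

variable [StarRing A]

/-- `P` and `M` model the Fourier images of `L¹(ℝ₊)` and `L¹(ℝ₋)`: subrings with trivial
intersection which are exchanged by the involution. -/
structure StarPair (P M : NonUnitalSubring A) : Prop where
  inter : ∀ x, x ∈ P → x ∈ M → x = 0
  star_left : ∀ x ∈ P, star x ∈ M
  star_right : ∀ x ∈ M, star x ∈ P

namespace StarPair

variable {P M : NonUnitalSubring A} {m n : Type*}

lemma symm (h : StarPair P M) : StarPair M P :=
  ⟨fun x h1 h2 => h.inter x h2 h1, h.star_right, h.star_left⟩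

lemma eq_zero (h : StarPair P M) {X : Matrix m n A} (h1 : EntriesIn P X) (h2 : EntriesIn M X) :
    X = 0 := by
  ext i j
  exact h.inter _ (h1 i j) (h2 i j)

lemma conjT_left (h : StarPair P M) {X : Matrix m n A} (h1 : EntriesIn P X) :
    EntriesIn M Xᴴ := fun i j => h.star_left _ (h1 j i)

lemma conjT_right (h : StarPair P M) {X : Matrix m n A} (h1 : EntriesIn M X) :
    EntriesIn P Xᴴ := fun i j => h.star_right _ (h1 j i)

/-- The components of a decomposition along `P` and `M` are unique. -/
lemma unique (h : StarPair P M) {X X' Y Y' : Matrix m n A} (hX : EntriesIn P X)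
    (hX' : EntriesIn P X') (hY : EntriesIn M Y) (hY' : EntriesIn M Y') (e : X + Y = X' + Y') :
    X = X' ∧ Y = Y' := by
  have e1 : X - X' = Y' - Y := by
    rw [sub_eq_sub_iff_add_eq_add, e, add_comm]
  have h0 : X - X' = 0 := h.eq_zero (hX.sub hX') (e1 ▸ hY'.sub hY)
  refine ⟨sub_eq_zero.1 h0, ?_⟩
  rw [h0] at e1
  exact (sub_eq_zero.1 e1.symm).symm

end StarPair

/-- The data `a, b ∈ P`, `c, d ∈ M` satisfy the three identities of condition (L1). -/
structure EGData {p q : ℕ} (P M : NonUnitalSubring A) (a : Matrix (Fin p) (Fin p) A)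
    (b : Matrix (Fin p) (Fin q) A) (c : Matrix (Fin q) (Fin p) A)
    (d : Matrix (Fin q) (Fin q) A) : Prop where
  pair : StarPair P M
  ha : EntriesIn P a
  hb : EntriesIn P b
  hc : EntriesIn M c
  hd : EntriesIn M d
  l1 : aᴴ + a + aᴴ * a - cᴴ * c = 0
  l2 : dᴴ + d + dᴴ * d - bᴴ * b = 0
  l3 : b + aᴴ * b = cᴴ + cᴴ * d

/-- `k = M₁₁ x`, where `M₁₁ = T_α T_α* - T_β T_β*`: here `y₁ = T_α* x` and `y₂ = T_β* x` are the
components in `P` of `(1 + a*) x` and `b* x`. Exchanging `P` with `M` and `(a, b)` with `(d, c)`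
turns this into the description of `M₂₂`. -/
def MRel {p q : ℕ} {κ : Type*} (P M : NonUnitalSubring A) (a : Matrix (Fin p) (Fin p) A)
    (b : Matrix (Fin p) (Fin q) A) (x k : Matrix (Fin p) κ A) : Prop :=
  ∃ (y₁ : Matrix (Fin p) κ A) (y₂ : Matrix (Fin q) κ A) (m₁ : Matrix (Fin p) κ A)
    (m₂ : Matrix (Fin q) κ A), EntriesIn P y₁ ∧ EntriesIn P y₂ ∧ EntriesIn M m₁ ∧
    EntriesIn M m₂ ∧ (1 + aᴴ) * x = y₁ + m₁ ∧ bᴴ * x = y₂ + m₂ ∧ (1 + a) * y₁ - b * y₂ = k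

section MRel

variable {p q : ℕ} {κ : Type*} {P M : NonUnitalSubring A} {a : Matrix (Fin p) (Fin p) A}
    {b : Matrix (Fin p) (Fin q) A}

lemma MRel.col {x k : Matrix (Fin p) κ A} (h : MRel P M a b x k) (j : κ) :
    MRel P M a b (colM x j) (colM k j) := by
  obtain ⟨y₁, y₂, m₁, m₂, h1, h2, h3, h4, e1, e2, e3⟩ := h
  refine ⟨colM y₁ j, colM y₂ j, colM m₁ j, colM m₂ j, fun i _ => h1 i j, fun i _ => h2 i j,
    fun i _ => h3 i j, fun i _ => h4 i j, ?_, ?_, ?_⟩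
  · rw [← colM_mul, e1]; rfl
  · rw [← colM_mul, e2]; rfl
  · rw [← colM_mul, ← colM_mul, ← e3]; rfl

lemma MRel.of_col {x k : Matrix (Fin p) κ A} (h : ∀ j, MRel P M a b (colM x j) (colM k j)) :
    MRel P M a b x k := by
  choose y₁ y₂ m₁ m₂ h1 h2 h3 h4 e1 e2 e3 using h
  refine ⟨.of fun i j => y₁ j i (), .of fun i j => y₂ j i (), .of fun i j => m₁ j i (),
    .of fun i j => m₂ j i (), fun i j => h1 j i (), fun i j => h2 j i (), fun i j => h3 j i (),
    fun i j => h4 j i (), colM_ext fun j => ?_, colM_ext fun j => ?_, colM_ext fun j => ?_⟩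
  · rw [colM_mul, e1]; rfl
  · rw [colM_mul, e2]; rfl
  · rw [← e3 j]
    ext i l
    simp [colM, Matrix.mul_apply]

lemma MRel.unique (hP : StarPair P M) {x k k' : Matrix (Fin p) κ A} (h : MRel P M a b x k)
    (h' : MRel P M a b x k') : k = k' := by
  obtain ⟨y₁, y₂, m₁, m₂, h1, h2, h3, h4, e1, e2, e3⟩ := h
  obtain ⟨y₁', y₂', m₁', m₂', h1', h2', h3', h4', e1', e2', e3'⟩ := h'
  rw [← e3, ← e3', (hP.unique h1 h1' h3 h3' (e1.symm.trans e1')).1,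
    (hP.unique h2 h2' h4 h4' (e2.symm.trans e2')).1]

end MRel

namespace EGData

variable {p q : ℕ} {P M : NonUnitalSubring A} {a : Matrix (Fin p) (Fin p) A}
    {b : Matrix (Fin p) (Fin q) A} {c : Matrix (Fin q) (Fin p) A} {d : Matrix (Fin q) (Fin q) A}

/-- Exchanging the roles of `P` and `M` exchanges `M₁₁` and `M₂₂`. -/
lemma swap (h : EGData P M a b c d) : EGData M P d c b a where
  pair := h.pair.symm
  ha := h.hd
  hb := h.hc
  hc := h.hb
  hd := h.ha
  l1 := h.l2
  l2 := h.l1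
  l3 := by
    have := congrArg conjTranspose h.l3
    simpa using this.symm

lemma m11 (h : EGData P M a b c d) : (1 + aᴴ) * (1 + a) = 1 + cᴴ * c := by
  have := h.l1
  rw [← sub_eq_zero, ← this]
  noncomm_ring

lemma m12 (h : EGData P M a b c d) : (1 + aᴴ) * b = cᴴ * (1 + d) := by
  have := h.l3
  rw [Matrix.add_mul, Matrix.one_mul, this, Matrix.mul_add, Matrix.mul_one]

/-- Condition (L1) says that the block matrix with rows `(α, β)` and `(γ, δ)` is `J`-unitary on
one side. Over a commutative ring a one-sided inverse of a square matrix is two-sided, so it is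
`J`-unitary on the other side as well. -/
lemma transposed (h : EGData P M a b c d) :
    (1 + a) * (1 + aᴴ) - b * bᴴ = 1 ∧ (1 + a) * cᴴ = b * (1 + dᴴ) ∧
    c * (1 + aᴴ) = (1 + d) * bᴴ ∧ (1 + d) * (1 + dᴴ) - c * cᴴ = 1 := by
  have h22 := h.swap.m11
  have h21 := h.swap.m12
  have hinv : Matrix.fromBlocks (1 + aᴴ) (-cᴴ) (-bᴴ) (1 + dᴴ) *
      Matrix.fromBlocks (1 + a) b c (1 + d) = 1 := by
    rw [Matrix.fromBlocks_multiply, ← Matrix.fromBlocks_one]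
    congr 1
    · rw [h.m11, Matrix.neg_mul]; abel
    · rw [h.m12, Matrix.neg_mul]; abel
    · rw [h21, Matrix.neg_mul]; abel
    · rw [h22, Matrix.neg_mul]; abel
  have hinv' := _root_.mul_eq_one_comm.1 hinv
  rw [Matrix.fromBlocks_multiply, ← Matrix.fromBlocks_one, Matrix.fromBlocks_inj] at hinv'
  obtain ⟨h1, h2, h3, h4⟩ := hinv'
  simp only [Matrix.mul_neg] at h1 h2 h3 h4
  refine ⟨by rw [sub_eq_add_neg, h1], ?_, ?_, ?_⟩
  · rw [neg_add_eq_sub, sub_eq_zero] at h2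
    exact h2.symm
  · rwa [← sub_eq_add_neg, sub_eq_zero] at h3
  · rwa [neg_add_eq_sub] at h4

/-- A solution `g` of the second and third inclusions satisfies `M₁₁ g = -b`. -/
lemma mrel_of_sol (h : EGData P M a b c d) {g : Matrix (Fin p) (Fin q) A}
    (h2 : EntriesIn P (gᴴ + gᴴ * a + c)) (h3 : EntriesIn P (d + gᴴ * b)) :
    MRel P M a b g (-b) := by
  obtain ⟨-, t2, -, -⟩ := h.transposed
  refine ⟨-cᴴ, -dᴴ, (gᴴ + gᴴ * a + c)ᴴ, (d + gᴴ * b)ᴴ, (h.pair.conjT_right h.hc).neg,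
    (h.pair.conjT_right h.hd).neg, h.pair.conjT_left h2, h.pair.conjT_left h3, ?_, ?_, ?_⟩
  · simp [Matrix.add_mul]
  · simp
  · rw [Matrix.mul_neg, t2]
    simp [Matrix.mul_add]

/-- If `M₂₂` is injective and `M₁₁ g = -b`, then `g` satisfies the second and third inclusions.
With `y₁, y₂` the components in `P` of `α* g` and `β* g`, the elements `z₁ = y₁ + c*` and
`z₂ = y₂ + d*` satisfy `α z₁ = β z₂`, and `w = γ z₁ - δ z₂` lies in `M` with `γ* w = -z₁`,
`δ* w = -z₂` in `P`; hence `M₂₂ w = 0`. -/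
lemma sol_of_mrel (h : EGData P M a b c d)
    (hinj : ∀ w : Matrix (Fin q) Unit A, EntriesIn M w → MRel M P d c w 0 → w = 0)
    {g : Matrix (Fin p) (Fin q) A} (hg : MRel P M a b g (-b)) :
    EntriesIn P (gᴴ + gᴴ * a + c) ∧ EntriesIn P (d + gᴴ * b) := by
  obtain ⟨t1, t2, t3, t4⟩ := h.transposed
  have h22 := h.swap.m11
  have h21 := h.swap.m12
  obtain ⟨y₁, y₂, m₁, m₂, k1, k2, k3, k4, e1, e2, e3⟩ := hg
  set z₁ := y₁ + cᴴ with hz₁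
  set z₂ := y₂ + dᴴ with hz₂
  have hz₁P : EntriesIn P z₁ := k1.add (h.pair.conjT_right h.hc)
  have hz₂P : EntriesIn P z₂ := k2.add (h.pair.conjT_right h.hd)
  have hz : (1 + a) * z₁ = b * z₂ := by
    rw [hz₁, hz₂, Matrix.mul_add, Matrix.mul_add, t2, Matrix.mul_add, Matrix.mul_one,
      ← sub_eq_zero]
    have : b + ((1 + a) * y₁ - b * y₂) = 0 := by rw [e3]; abel
    rw [← this]; abel
  set w := c * z₁ - (1 + d) * z₂ with hw
  have hwM : EntriesIn M w := by
    have e : w = -(c * m₁) + (m₂ + d * m₂) + d := by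
      have f1 : y₁ = (1 + aᴴ) * g - m₁ := by rw [e1]; abel
      have f2 : y₂ = bᴴ * g - m₂ := by rw [e2]; abel
      have f3 : c * cᴴ = (1 + d) * (1 + dᴴ) - 1 := by
        rw [eq_sub_iff_add_eq', ← sub_eq_iff_eq_add.1 t4]
      rw [hw, hz₁, hz₂, Matrix.mul_add, f3, f1, f2, Matrix.mul_sub, ← Matrix.mul_assoc, t3]
      simp only [Matrix.mul_add, Matrix.add_mul, Matrix.mul_sub, Matrix.mul_one, Matrix.one_mul,
        Matrix.mul_assoc]
      abel
    rw [e]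
    exact ((h.hc.mul k3).neg.add (k4.add (h.hd.mul k4))).add h.hd
  have hcw : cᴴ * w = -z₁ := by
    have f : cᴴ * c = (1 + aᴴ) * (1 + a) - 1 := by rw [h.m11]; abel
    rw [hw, Matrix.mul_sub, ← Matrix.mul_assoc, ← Matrix.mul_assoc, f, ← h.m12, Matrix.sub_mul,
      Matrix.mul_assoc, hz, Matrix.mul_assoc, Matrix.one_mul]
    abel
  have hdw : (1 + dᴴ) * w = -z₂ := by
    rw [hw, Matrix.mul_sub, ← Matrix.mul_assoc, ← Matrix.mul_assoc, h21, h22, Matrix.add_mul,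
      Matrix.mul_assoc, hz, Matrix.mul_assoc, Matrix.one_mul]
    abel
  have hw0 : w = 0 := by
    have hM : MRel M P d c w 0 :=
      ⟨0, 0, -z₂, -z₁, EntriesIn.zero, EntriesIn.zero, hz₂P.neg, hz₁P.neg, by simp [hdw],
        by simp [hcw], by simp⟩
    exact colM_ext fun j => hinj _ (fun i _ => hwM i j) (hM.col j)
  have z1 : z₁ = 0 := by simpa [hw0] using hcw.symm
  have z2 : z₂ = 0 := by simpa [hw0] using hdw.symm
  constructor
  · have e : gᴴ + gᴴ * a + c = m₁ᴴ := by
      have : m₁ = g + aᴴ * g + cᴴ := by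
        have : m₁ = (1 + aᴴ) * g - y₁ := by rw [e1]; abel
        rw [this, eq_neg_of_add_eq_zero_left z1, Matrix.add_mul, Matrix.one_mul]; abel
      rw [this]; simp
    rw [e]; exact h.pair.conjT_right k3
  · have e : d + gᴴ * b = m₂ᴴ := by
      have : m₂ = dᴴ + bᴴ * g := by
        have : m₂ = bᴴ * g - y₂ := by rw [e2]; abel
        rw [this, eq_neg_of_add_eq_zero_left z2]; abel
      rw [this]; simp
    rw [e]; exact h.pair.conjT_right k4

/-- The solution `g` of one pair of inclusions and the solution `k*` of the other pair agree:
multiplying out, `g - k* = u v - y x` with `u = α + k* γ` and `x = δ* + β* g` in `1 + M`, and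
`v = α* g + γ*` and `y = k* δ + β` in `M`, so that `g - k*` lies in both `P` and `M`. -/
lemma eq_of_halves (h : EGData P M a b c d) {g : Matrix (Fin p) (Fin q) A}
    {k : Matrix (Fin q) (Fin p) A} (hg : EntriesIn P g) (hk : EntriesIn M k)
    (h2 : EntriesIn P (gᴴ + gᴴ * a + c)) (h3 : EntriesIn P (d + gᴴ * b))
    (h4 : EntriesIn M (kᴴ + kᴴ * d + b)) (h1 : EntriesIn M (a + kᴴ * c)) : g = kᴴ := by
  obtain ⟨t1, t2, t3, t4⟩ := h.transposed
  have v := h.pair.conjT_left h2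
  have x := h.pair.conjT_left h3
  set v' := (gᴴ + gᴴ * a + c)ᴴ with hv'
  set x' := (d + gᴴ * b)ᴴ with hx'
  have ev : v' = (1 + aᴴ) * g + cᴴ := by rw [hv']; simp [Matrix.add_mul]
  have ex : 1 + x' = (1 + dᴴ) + bᴴ * g := by rw [hx']; simp [add_assoc]
  have e : g - kᴴ = v' + (a + kᴴ * c) * v' - (kᴴ + kᴴ * d + b)
      - (kᴴ + kᴴ * d + b) * x' := by
    have e1 : v' + (a + kᴴ * c) * v' - (kᴴ + kᴴ * d + b) - (kᴴ + kᴴ * d + b) * x'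
        = ((1 + a) + kᴴ * c) * v' - (kᴴ * (1 + d) + b) * (1 + x') := by
      simp only [Matrix.mul_add, Matrix.add_mul, Matrix.mul_one, Matrix.one_mul]
      abel
    rw [e1, ev, ex]
    have e2 : ((1 + a) + kᴴ * c) * ((1 + aᴴ) * g + cᴴ)
        - (kᴴ * (1 + d) + b) * ((1 + dᴴ) + bᴴ * g)
        = ((1 + a) * (1 + aᴴ) - b * bᴴ) * g + ((1 + a) * cᴴ - b * (1 + dᴴ))
          + kᴴ * (c * (1 + aᴴ) - (1 + d) * bᴴ) * g
          - kᴴ * ((1 + d) * (1 + dᴴ) - c * cᴴ) := by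
      simp only [Matrix.mul_add, Matrix.add_mul, Matrix.mul_sub, Matrix.sub_mul, Matrix.mul_one,
        Matrix.one_mul, Matrix.mul_assoc]
      abel
    rw [e2, t1, t2, t3, t4]
    simp
  have hM : EntriesIn M (g - kᴴ) := by
    rw [e]
    exact ((v.add (h1.mul v)).sub h4).sub (h4.mul x)
  exact sub_eq_zero.1 (h.pair.eq_zero (hg.sub (h.pair.conjT_right hk)) hM)

end EGData

end Algebra

/-! ### The Fourier transform on `L¹(ℝ)` -/

section Fourier

open FourierTransform Convolution

/-- The Fourier transform of a scalar function, as an element of the commutative star ring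
`ℝ → ℂ` with pointwise operations. -/
def ft (f : ℝ → ℂ) : ℝ → ℂ := 𝓕 f

/-- The convolution of scalar functions. -/
def cv (f h : ℝ → ℂ) : ℝ → ℂ := fun t => ∫ τ : ℝ, f (t - τ) * h τ

lemma ft_apply (f : ℝ → ℂ) (ξ : ℝ) :
    ft f ξ = ∫ v, 𝐞 (-(v * ξ)) • f v := by
  rw [ft, Real.fourier_real_eq]

lemma ft_congr {f g : ℝ → ℂ} (h : f =ᵐ[volume] g) : ft f = ft g := by
  ext ξ
  rw [ft_apply, ft_apply]
  refine integral_congr_ae ?_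
  filter_upwards [h] with v hv
  rw [hv]

lemma ft_zero : ft (fun _ => 0) = 0 := by
  ext ξ
  simp [ft_apply]

lemma integrable_char {f : ℝ → ℂ} (hf : Integrable f) (ξ : ℝ) :
    Integrable fun v => 𝐞 (-(v * ξ)) • f v := by
  have := (Real.fourierIntegral_convergent_iff (μ := volume) (f := f) ξ).2 hf
  simpa [mul_comm] using this

lemma ft_add {f g : ℝ → ℂ} (hf : Integrable f) (hg : Integrable g) :
    ft (fun t => f t + g t) = ft f + ft g := by
  ext ξ
  rw [Pi.add_apply, ft_apply, ft_apply, ft_apply,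
    ← integral_add (integrable_char hf ξ) (integrable_char hg ξ)]
  simp [smul_add]

lemma ft_neg (f : ℝ → ℂ) : ft (fun t => -f t) = -ft f := by
  ext ξ
  rw [Pi.neg_apply, ft_apply, ft_apply, ← integral_neg]
  simp

lemma ft_sub {f g : ℝ → ℂ} (hf : Integrable f) (hg : Integrable g) :
    ft (fun t => f t - g t) = ft f - ft g := by
  simp only [sub_eq_add_neg]
  exact (ft_add hf hg.neg).trans (congrArg (ft f + ·) (ft_neg g))

lemma ft_sum {ι : Type*} (s : Finset ι) {f : ι → ℝ → ℂ} (hf : ∀ i, Integrable (f i)) :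
    ft (fun t => ∑ i ∈ s, f i t) = ∑ i ∈ s, ft (f i) := by
  classical
  induction s using Finset.induction_on with
  | empty => simpa using ft_zero
  | insert i s hi ih =>
    simp only [Finset.sum_insert hi]
    rw [ft_add (hf i) (integrable_finsetSum s fun i _ => hf i), ih]

lemma ft_star (f : ℝ → ℂ) : ft (fun t => conj (f (-t))) = star (ft f) := by
  ext ξ
  rw [Pi.star_apply, ft_apply, ft_apply, ← starRingEnd_apply, ← integral_conj,
    ← integral_neg_eq_self]
  congr with v
  simp [Circle.smul_def, ← Circle.coe_inv_eq_conj, AddChar.map_neg_eq_inv]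

lemma cv_eq (f h : ℝ → ℂ) :
    cv f h = f ⋆[ContinuousLinearMap.mul ℂ ℂ, volume] h := by
  ext t
  rw [cv, convolution_mul_swap]

lemma integrable_cv {f h : ℝ → ℂ} (hf : Integrable f) (hh : Integrable h) :
    Integrable (cv f h) := by
  rw [cv_eq]
  exact hf.integrable_convolution _ hh

lemma ft_cv {f h : ℝ → ℂ} (hf : Integrable f) (hh : Integrable h) :
    ft (cv f h) = ft f * ft h := by
  ext ξ
  rw [cv_eq]
  exact Real.fourier_mul_convolution_eq hf hh ξ

lemma ae_integrable_cv {f h : ℝ → ℂ} (hf : Integrable f) (hh : Integrable h) :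
    ∀ᵐ t : ℝ, Integrable fun τ => f (t - τ) * h τ := by
  have := hf.ae_convolution_exists (ContinuousLinearMap.mul ℂ ℂ) hh
  filter_upwards [this] with t ht
  exact ht.integrable_swap

/-- The Fourier transform is injective on `L¹(ℝ)`. -/
lemma ae_zero_of_ft {f : ℝ → ℂ} (hf : Integrable f) (h : ft f = 0) : ∀ᵐ t, f t = 0 := by
  refine ae_eq_zero_of_integral_contDiff_smul_eq_zero hf.locallyIntegrable fun φ hφ hc => ?_
  have hc' : HasCompactSupport (fun x => (φ x : ℂ)) := hc.comp_left (g := fun r : ℝ => (r : ℂ)) rfl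
  have hφ' : ContDiff ℝ (⊤ : ℕ∞) (fun x => (φ x : ℂ)) := Complex.ofRealCLM.contDiff.comp hφ
  let ψ : SchwartzMap ℝ ℂ := hc'.toSchwartzMap hφ'
  -- a test function is the Fourier transform of a Schwartz function, which can be moved onto `f`
  let χ : SchwartzMap ℝ ℂ := 𝓕⁻ ψ
  have hχ : 𝓕 (χ : ℝ → ℂ) = fun x => (φ x : ℂ) := by
    have : 𝓕 χ = ψ := FourierTransform.fourier_fourierInv_eq ψ
    rw [← SchwartzMap.fourier_coe, this]
    rfl
  have key : ∫ x, 𝓕 (χ : ℝ → ℂ) x • f x = ∫ x, χ x • 𝓕 f x := by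
    simpa using! VectorFourier.integral_fourierIntegral_smul_eq_flip (μ := volume) (ν := volume)
      (L := innerₗ ℝ) Real.continuous_fourierChar continuous_inner χ.integrable hf
  rw [hχ] at key
  have h' : 𝓕 f = 0 := h
  simpa [h'] using key

lemma ae_eq_of_ft {f g : ℝ → ℂ} (hf : Integrable f) (hg : Integrable g) (h : ft f = ft g) :
    ∀ᵐ t, f t = g t := by
  have := ae_zero_of_ft (hf.sub hg) (by
    have := ft_sub hf hg
    rw [h, sub_self] at this
    exact this)
  filter_upwards [this] with t ht
  exact sub_eq_zero.1 ht

/-- The Fourier transforms of the integrable functions vanishing off the additive semigroup `S`. -/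
def suppRing (S : Set ℝ) (hS : ∀ x ∈ S, ∀ y ∈ S, x + y ∈ S) : NonUnitalSubring (ℝ → ℂ) where
  carrier := {X | ∃ f : ℝ → ℂ, Integrable f ∧ (∀ t ∉ S, f t = 0) ∧ ft f = X}
  zero_mem' := ⟨fun _ => 0, by simp, by simp, ft_zero⟩
  add_mem' := by
    rintro _ _ ⟨f, hf, hf0, rfl⟩ ⟨g, hg, hg0, rfl⟩
    exact ⟨_, hf.add hg, fun t ht => by simp [hf0 t ht, hg0 t ht], ft_add hf hg⟩
  neg_mem' := by
    rintro _ ⟨f, hf, hf0, rfl⟩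
    exact ⟨_, hf.neg, fun t ht => by simp [hf0 t ht], ft_neg f⟩
  mul_mem' := by
    rintro _ _ ⟨f, hf, hf0, rfl⟩ ⟨g, hg, hg0, rfl⟩
    refine ⟨cv f g, integrable_cv hf hg, fun t ht => ?_, ft_cv hf hg⟩
    rw [cv, ← integral_zero ℝ ℂ]
    congr with τ
    by_cases h1 : τ ∈ S
    · have h2 : t - τ ∉ S := fun h2 => ht (by simpa using hS _ h2 _ h1)
      simp [hf0 _ h2]
    · simp [hg0 _ h1]

lemma mem_suppRing {S : Set ℝ} {hS : ∀ x ∈ S, ∀ y ∈ S, x + y ∈ S} {f : ℝ → ℂ}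
    (hf : Integrable f) (h : ∀ᵐ t, t ∉ S → f t = 0) (hm : MeasurableSet S) :
    ft f ∈ suppRing S hS := by
  refine ⟨S.indicator f, hf.indicator hm, fun t ht => indicator_of_notMem ht f, ft_congr ?_⟩
  filter_upwards [h] with t ht
  by_cases hS : t ∈ S
  · simp [hS]
  · simp [hS, ht hS]

lemma ae_zero_of_mem_suppRing {S : Set ℝ} {hS : ∀ x ∈ S, ∀ y ∈ S, x + y ∈ S} {f : ℝ → ℂ}
    (hf : Integrable f) (h : ft f ∈ suppRing S hS) : ∀ᵐ t, t ∉ S → f t = 0 := by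
  obtain ⟨g, hg, hg0, e⟩ := h
  filter_upwards [ae_eq_of_ft hg hf e] with t ht h0
  rw [← ht, hg0 t h0]

/-- The Fourier transforms of `L¹(ℝ₊)`. -/
abbrev ringP : NonUnitalSubring (ℝ → ℂ) :=
  suppRing (Ici 0) fun _ hx _ hy => mem_Ici.2 (add_nonneg hx hy)

/-- The Fourier transforms of `L¹(ℝ₋)`. -/
abbrev ringM : NonUnitalSubring (ℝ → ℂ) :=
  suppRing (Iic 0) fun _ hx _ hy => mem_Iic.2 (add_nonpos hx hy)

lemma starPair : StarPair ringP ringM where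
  inter := by
    rintro x ⟨f, hf, hf0, rfl⟩ h
    have h2 := ae_zero_of_mem_suppRing hf h
    rw [← ft_zero]
    refine ft_congr ?_
    filter_upwards [h2, Measure.ae_ne volume 0] with t ht hne
    by_cases h : t ∈ Ici (0 : ℝ)
    · rcases eq_or_lt_of_le (mem_Ici.1 h) with h0 | h0
      · exact absurd h0.symm hne
      · exact ht (by simpa using h0)
    · exact hf0 t h
  star_left := by
    rintro x ⟨f, hf, hf0, rfl⟩
    rw [← ft_star]
    refine ⟨_, ?_, fun t ht => ?_, rfl⟩
    · have := hf.comp_neg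
      exact (Complex.conjCLE.toContinuousLinearMap.integrable_comp this)
    · rw [hf0 _ (by simpa using ht)]; simp
  star_right := by
    rintro x ⟨f, hf, hf0, rfl⟩
    rw [← ft_star]
    refine ⟨_, ?_, fun t ht => ?_, rfl⟩
    · have := hf.comp_neg
      exact (Complex.conjCLE.toContinuousLinearMap.integrable_comp this)
    · rw [hf0 _ (by simpa using ht)]; simp

end Fourier

/-! ### Fourier transforms of matrix functions -/

section MatrixFourier

variable {r s u : ℕ}

/-- Entrywise integrability. -/
def IntM (F : MatF r s) : Prop := ∀ i j, Integrable fun t => F t i j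

/-- The entrywise Fourier transform of a matrix function. -/
def ftM (F : MatF r s) : Matrix (Fin r) (Fin s) (ℝ → ℂ) := .of fun i j => ft fun t => F t i j

lemma ftM_congr {F G : MatF r s} (h : ∀ᵐ t, F t = G t) : ftM F = ftM G := by
  ext1 i j
  refine ft_congr ?_
  filter_upwards [h] with t ht
  rw [ht]

lemma IntM.add {F G : MatF r s} (hF : IntM F) (hG : IntM G) : IntM fun t => F t + G t :=
  fun i j => (hF i j).add (hG i j)

lemma IntM.sub {F G : MatF r s} (hF : IntM F) (hG : IntM G) : IntM fun t => F t - G t :=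
  fun i j => (hF i j).sub (hG i j)

lemma ftM_add {F G : MatF r s} (hF : IntM F) (hG : IntM G) :
    ftM (fun t => F t + G t) = ftM F + ftM G := by
  ext1 i j
  exact ft_add (hF i j) (hG i j)

lemma ftM_sub {F G : MatF r s} (hF : IntM F) (hG : IntM G) :
    ftM (fun t => F t - G t) = ftM F - ftM G := by
  ext1 i j
  exact ft_sub (hF i j) (hG i j)

lemma ftM_zero : ftM (fun _ => (0 : Matrix (Fin r) (Fin s) ℂ)) = 0 := by
  ext1 i j
  exact ft_zero

lemma IntM.adj {F : MatF r s} (hF : IntM F) : IntM (adjF F) := fun i j => by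
  have := (hF j i).comp_neg
  exact Complex.conjCLE.toContinuousLinearMap.integrable_comp this

lemma ftM_adj (F : MatF r s) : ftM (adjF F) = (ftM F)ᴴ := by
  ext1 i j
  exact ft_star (fun t => F t j i)

/-- Almost everywhere, an entry of a convolution of matrix functions is the sum of the
convolutions of the entries; the exceptional set is where one of these integrals diverges. -/
lemma conv_ae {F : MatF r s} {G : MatF s u} (hF : IntM F) (hG : IntM G) (i : Fin r) (j : Fin u) :
    ∀ᵐ t, conv F G t i j = ∑ k, cv (fun t => F t i k) (fun t => G t k j) t := by
  have : ∀ᵐ t : ℝ, ∀ k, Integrable fun τ => F (t - τ) i k * G τ k j :=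
    ae_all_iff.2 fun k =>
      ae_integrable_cv (f := fun t => F t i k) (h := fun t => G t k j) (hF i k) (hG k j)
  filter_upwards [this] with t ht
  simp only [conv, Matrix.of_apply, Matrix.mul_apply, cv]
  exact integral_finsetSum _ fun k _ => ht k

lemma IntM.conv {F : MatF r s} {G : MatF s u} (hF : IntM F) (hG : IntM G) :
    IntM (conv F G) := fun i j =>
  (integrable_finsetSum Finset.univ fun k _ => integrable_cv (hF i k) (hG k j)).congr
    ((conv_ae hF hG i j).mono fun _ h => h.symm)

lemma ftM_conv {F : MatF r s} {G : MatF s u} (hF : IntM F) (hG : IntM G) :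
    ftM (conv F G) = ftM F * ftM G := by
  ext1 i j
  rw [Matrix.mul_apply]
  refine (ft_congr (conv_ae hF hG i j)).trans ?_
  rw [ft_sum _ fun k => integrable_cv (hF i k) (hG k j)]
  exact Finset.sum_congr rfl fun k _ => ft_cv (hF i k) (hG k j)

lemma ae_eq_of_ftM {F G : MatF r s} (hF : IntM F) (hG : IntM G) (h : ftM F = ftM G) :
    ∀ᵐ t, F t = G t := by
  have : ∀ᵐ t, ∀ i j, F t i j = G t i j :=
    ae_all_iff.2 fun i => ae_all_iff.2 fun j =>
      ae_eq_of_ft (hF i j) (hG i j) (congrFun (congrFun h i) j)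
  filter_upwards [this] with t ht
  ext i j
  exact ht i j

lemma L1Plus.mem {F : MatF r s} (h : L1Plus F) : EntriesIn ringP (ftM F) := fun i j =>
  ⟨_, h.1 i j, fun t ht => by simp [h.2 t (by simpa using ht)], rfl⟩

lemma L1Minus.mem {F : MatF r s} (h : L1Minus F) : EntriesIn ringM (ftM F) := fun i j =>
  ⟨_, h.1 i j, fun t ht => by simp [h.2 t (by simpa using ht)], rfl⟩

lemma mem_ringP_iff {F : MatF r s} (hF : IntM F) :
    EntriesIn ringP (ftM F) ↔ AeZeroNeg F := by
  constructor
  · intro h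
    have : ∀ᵐ t, ∀ i j, t ∉ Ici (0 : ℝ) → F t i j = 0 :=
      ae_all_iff.2 fun i => ae_all_iff.2 fun j => ae_zero_of_mem_suppRing (hF i j) (h i j)
    filter_upwards [this] with t ht h0
    ext i j
    exact ht i j (by simpa using h0)
  · intro h i j
    refine mem_suppRing (hF i j) ?_ measurableSet_Ici
    filter_upwards [h] with t ht h0
    rw [ht (by simpa using h0)]; rfl

lemma mem_ringM_iff {F : MatF r s} (hF : IntM F) :
    EntriesIn ringM (ftM F) ↔ AeZeroPos F := by
  constructor
  · intro h
    have : ∀ᵐ t, ∀ i j, t ∉ Iic (0 : ℝ) → F t i j = 0 :=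
      ae_all_iff.2 fun i => ae_all_iff.2 fun j => ae_zero_of_mem_suppRing (hF i j) (h i j)
    filter_upwards [this] with t ht h0
    ext i j
    exact ht i j (by simpa using h0)
  · intro h i j
    refine mem_suppRing (hF i j) ?_ measurableSet_Iic
    filter_upwards [h] with t ht h0
    rw [ht (by simpa using h0)]; rfl

/-- Condition (L1) on the Fourier side. -/
lemma egData {p q : ℕ} {a : MatF p p} {b : MatF p q} {c : MatF q p} {d : MatF q q}
    (ha : L1Plus a) (hb : L1Plus b) (hc : L1Minus c) (hd : L1Minus d) (h : CondL1 a b c d) :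
    EGData ringP ringM (ftM a) (ftM b) (ftM c) (ftM d) := by
  have ia : IntM a := ha.1
  have ib : IntM b := hb.1
  have ic : IntM c := hc.1
  have id : IntM d := hd.1
  obtain ⟨h1, h2, h3⟩ := h
  refine ⟨starPair, ha.mem, hb.mem, hc.mem, hd.mem, ?_, ?_, ?_⟩
  · have := ftM_congr h1
    rwa [ftM_sub ((ia.adj.add ia).add (ia.adj.conv ia)) (ic.adj.conv ic),
      ftM_add (ia.adj.add ia) (ia.adj.conv ia), ftM_add ia.adj ia, ftM_conv ia.adj ia,
      ftM_conv ic.adj ic, ftM_adj, ftM_adj, ftM_zero] at this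
  · have := ftM_congr h2
    rwa [ftM_sub ((id.adj.add id).add (id.adj.conv id)) (ib.adj.conv ib),
      ftM_add (id.adj.add id) (id.adj.conv id), ftM_add id.adj id, ftM_conv id.adj id,
      ftM_conv ib.adj ib, ftM_adj, ftM_adj, ftM_zero] at this
  · have := ftM_congr h3
    rwa [ftM_add ib (ia.adj.conv ib), ftM_add ic.adj (ic.adj.conv id), ftM_conv ia.adj ib,
      ftM_conv ic.adj id, ftM_adj, ftM_adj] at this

/-- The four inclusions of the inverse problem on the Fourier side. -/
lemma egSol_iff {p q : ℕ} {a : MatF p p} {b : MatF p q} {c : MatF q p} {d : MatF q q}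
    {g : MatF p q} (ia : IntM a) (ib : IntM b) (ic : IntM c) (id : IntM d) (ig : IntM g) :
    EGSol a b c d g ↔
      EntriesIn ringM (ftM a + ftM g * ftM c) ∧
      EntriesIn ringP ((ftM g)ᴴ + (ftM g)ᴴ * ftM a + ftM c) ∧
      EntriesIn ringP (ftM d + (ftM g)ᴴ * ftM b) ∧
      EntriesIn ringM (ftM g + ftM g * ftM d + ftM b) := by
  rw [EGSol, ← mem_ringM_iff (ia.add (ig.conv ic)),
    ← mem_ringP_iff ((ig.adj.add (ig.adj.conv ia)).add ic),
    ← mem_ringP_iff (id.add (ig.adj.conv ib)), ← mem_ringM_iff ((ig.add (ig.conv id)).add ib),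
    ftM_add ia (ig.conv ic), ftM_add (ig.adj.add (ig.adj.conv ia)) ic,
    ftM_add ig.adj (ig.adj.conv ia), ftM_add id (ig.adj.conv ib),
    ftM_add (ig.add (ig.conv id)) ib, ftM_add ig (ig.conv id), ftM_conv ig ic,
    ftM_conv ig.adj ia, ftM_conv ig.adj ib, ftM_conv ig id, ftM_adj]

end MatrixFourier

/-! ### Convolution and truncation as operators on `L¹(ℝ)` -/

section Operators

open Convolution

/-- The Banach space `L¹(ℝ)` of complex functions. -/
abbrev LOne := Lp ℂ 1 (volume : Measure ℝ)

lemma intL (φ : LOne) : Integrable φ := L1.integrable_coeFn φ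

lemma ft_smul (z : ℂ) (f : ℝ → ℂ) : ft (fun t => z * f t) = z • ft f := by
  ext ξ
  rw [Pi.smul_apply, ft_apply, ft_apply, smul_eq_mul, ← integral_const_mul]
  congr with v
  simp only [Circle.smul_def, smul_eq_mul]
  ring

/-- The Fourier transform as a linear map on `L¹(ℝ)`. -/
def ftL : LOne →ₗ[ℂ] (ℝ → ℂ) where
  toFun φ := ft φ
  map_add' φ ψ := by
    rw [← ft_add (intL φ) (intL ψ)]
    exact ft_congr (Lp.coeFn_add φ ψ)
  map_smul' z φ := by
    rw [RingHom.id_apply, ← ft_smul]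
    exact ft_congr (Lp.coeFn_smul z φ)

lemma ftL_apply (φ : LOne) : ftL φ = ft φ := rfl

lemma ftL_toL1 {f : ℝ → ℂ} (hf : Integrable f) : ftL (hf.toL1 f) = ft f :=
  ft_congr hf.coeFn_toL1

lemma ftL_injective : Function.Injective ftL := fun φ ψ h =>
  Lp.ext (ae_eq_of_ft (intL φ) (intL ψ) h)

lemma integral_norm_cv_le {f h : ℝ → ℂ} (hf : Integrable f) (hh : Integrable h) :
    ∫ t, ‖cv f h t‖ ≤ (∫ t, ‖f t‖) * ∫ t, ‖h t‖ := by
  have e := integral_convolution (ContinuousLinearMap.mul ℝ ℝ) (μ := volume) (ν := volume)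
    hf.norm hh.norm
  have i := hf.norm.integrable_convolution (ContinuousLinearMap.mul ℝ ℝ) (μ := volume) hh.norm
  rw [ContinuousLinearMap.mul_apply'] at e
  rw [← e]
  refine integral_mono (integrable_cv hf hh).norm i fun t => ?_
  simp only [convolution_mul_swap, cv]
  refine (norm_integral_le_integral_norm _).trans (le_of_eq ?_)
  simp

/-- Convolution as a bounded bilinear map on `L¹(ℝ)`. -/
def cvL : LOne →L[ℂ] LOne →L[ℂ] LOne :=
  LinearMap.mkContinuous₂
    (LinearMap.mk₂ ℂ (fun φ ψ : LOne => (integrable_cv (intL φ) (intL ψ)).toL1 _)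
      (fun φ φ' ψ => ftL_injective <| by
        simp only [map_add, ftL_toL1, ft_cv (intL _) (intL _), ← ftL_apply,
          add_mul])
      (fun z φ ψ => ftL_injective <| by
        simp only [map_smul, ftL_toL1, ft_cv (intL _) (intL _), ← ftL_apply,
          smul_mul_assoc])
      (fun φ ψ ψ' => ftL_injective <| by
        simp only [map_add, ftL_toL1, ft_cv (intL _) (intL _), ← ftL_apply,
          mul_add])
      (fun z φ ψ => ftL_injective <| by
        simp only [map_smul, ftL_toL1, ft_cv (intL _) (intL _), ← ftL_apply,
          mul_smul_comm])) 1
    (fun φ ψ => by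
      rw [LinearMap.mk₂_apply, L1.norm_eq_integral_norm, L1.norm_eq_integral_norm φ,
        L1.norm_eq_integral_norm ψ, one_mul]
      refine le_trans (le_of_eq ?_) (integral_norm_cv_le (intL φ) (intL ψ))
      refine integral_congr_ae ?_
      filter_upwards [(integrable_cv (intL φ) (intL ψ)).coeFn_toL1] with t ht
      rw [ht])

lemma ftL_cvL (φ ψ : LOne) : ftL (cvL φ ψ) = ftL φ * ftL ψ := by
  have : cvL φ ψ = (integrable_cv (intL φ) (intL ψ)).toL1 _ := rfl
  rw [this, ftL_toL1, ft_cv (intL φ) (intL ψ), ftL_apply, ftL_apply]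

variable {S : Set ℝ} {n : ℕ}

lemma integrable_indicator_coe (hS : MeasurableSet S) (f : Lp ℂ 1 (volume.restrict S)) :
    Integrable (S.indicator f) :=
  (integrable_indicator_iff hS).2 (L1.integrable_coeFn f)

/-- Extension by zero from `L¹(S)` to `L¹(ℝ)`. -/
def extS (hS : MeasurableSet S) : Lp ℂ 1 (volume.restrict S) →L[ℂ] LOne :=
  LinearMap.mkContinuous
    { toFun := fun f => (integrable_indicator_coe hS f).toL1 _
      map_add' := fun f g => by
        rw [← Integrable.toL1_add, Integrable.toL1_eq_toL1_iff]
        filter_upwards [(ae_restrict_iff' hS).1 (Lp.coeFn_add f g)] with t ht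
        by_cases h : t ∈ S
        · simpa [h] using! ht h
        · simp [h]
      map_smul' := fun z f => by
        rw [RingHom.id_apply, ← Integrable.toL1_smul, Integrable.toL1_eq_toL1_iff]
        filter_upwards [(ae_restrict_iff' hS).1 (Lp.coeFn_smul z f)] with t ht
        by_cases h : t ∈ S <;> simp [h, ht] } 1
    (fun f => by
      rw [LinearMap.coe_mk, AddHom.coe_mk, L1.norm_eq_integral_norm, L1.norm_eq_integral_norm f,
        one_mul, ← integral_indicator hS]
      refine le_of_eq (integral_congr_ae ?_)
      filter_upwards [(integrable_indicator_coe hS f).coeFn_toL1] with t ht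
      rw [ht, norm_indicator_eq_indicator_norm])

lemma extS_ae (hS : MeasurableSet S) (f : Lp ℂ 1 (volume.restrict S)) :
    extS hS f =ᵐ[volume] S.indicator f :=
  (integrable_indicator_coe hS f).coeFn_toL1

/-- Truncation to `S` on `L¹(ℝ)`. -/
def cut (hS : MeasurableSet S) : LOne →L[ℂ] LOne :=
  extS hS ∘L LpToLpRestrictCLM ℝ ℂ ℂ volume 1 S

lemma cut_ae (hS : MeasurableSet S) (φ : LOne) : cut hS φ =ᵐ[volume] S.indicator φ := by
  filter_upwards [extS_ae hS (LpToLpRestrictCLM ℝ ℂ ℂ volume 1 S φ),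
    (ae_restrict_iff' hS).1 (LpToLpRestrictCLM_coeFn (p := 1) ℂ S φ)] with t h1 h2
  rw [cut, ContinuousLinearMap.comp_apply, h1]
  by_cases h : t ∈ S <;> simp [h, h2]

lemma cut_of_ae (hS : MeasurableSet S) {φ : LOne} (h : ∀ᵐ t, t ∉ S → φ t = 0) :
    cut hS φ = φ := by
  refine Lp.ext ?_
  filter_upwards [cut_ae hS φ, h] with t h1 h2
  by_cases h : t ∈ S
  · simp [h1, h]
  · simp [h1, h, h2 h]

/-- The space `L¹(S)ⁿ`. -/
abbrev LVec (S : Set ℝ) (n : ℕ) := Lp (Fin n → ℂ) 1 (volume.restrict S)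

/-- The `i`-th component of an element of `L¹(S)ⁿ`, extended by zero. -/
def coordL (hS : MeasurableSet S) (i : Fin n) : LVec S n →L[ℂ] LOne :=
  extS hS ∘L (ContinuousLinearMap.proj (R := ℂ) (φ := fun _ : Fin n => ℂ) i).compLpL 1
    (volume.restrict S)

lemma coordL_ae (hS : MeasurableSet S) (i : Fin n) (f : LVec S n) :
    coordL hS i f =ᵐ[volume] S.indicator fun t => f t i := by
  filter_upwards [extS_ae hS ((ContinuousLinearMap.proj (R := ℂ) (φ := fun _ : Fin n => ℂ)
      i).compLpL 1 (volume.restrict S) f), (ae_restrict_iff' hS).1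
      (ContinuousLinearMap.coeFn_compLpL (ContinuousLinearMap.proj (R := ℂ)
        (φ := fun _ : Fin n => ℂ) i) f)] with t h1 h2
  rw [coordL, ContinuousLinearMap.comp_apply, h1]
  by_cases h : t ∈ S
  · simp only [h, indicator_of_mem, h2 h]; rfl
  · simp [h]

/-- The element of `L¹(S)ⁿ` with the restriction of the given function in position `i`. -/
def injL (S : Set ℝ) (i : Fin n) : LOne →L[ℂ] LVec S n :=
  (ContinuousLinearMap.single ℂ (fun _ : Fin n => ℂ) i).compLpL 1 (volume.restrict S) ∘L
    LpToLpRestrictCLM ℝ ℂ ℂ volume 1 S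

lemma coordL_injL (hS : MeasurableSet S) (i j : Fin n) (φ : LOne) :
    coordL hS i (injL S j φ) = if i = j then cut hS φ else 0 := by
  refine Lp.ext ?_
  have h1 := coordL_ae hS i (injL S j φ)
  have h2 := (ae_restrict_iff' hS).1 (ContinuousLinearMap.coeFn_compLpL
    (ContinuousLinearMap.single ℂ (fun _ : Fin n => ℂ) j)
    (LpToLpRestrictCLM ℝ ℂ ℂ volume 1 S φ))
  have h3 := (ae_restrict_iff' hS).1 (LpToLpRestrictCLM_coeFn (p := 1) ℂ S φ)
  filter_upwards [h1, h2, h3, cut_ae hS φ] with t h1 h2 h3 h4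
  rw [h1]
  by_cases h : t ∈ S
  · rw [indicator_of_mem h, injL, ContinuousLinearMap.comp_apply, h2 h, h3 h]
    by_cases hij : i = j
    · subst hij; simp [h4, h]
    · simp [hij]
  · by_cases hij : i = j <;> simp [hij, h4, h]

lemma injL_cut (hS : MeasurableSet S) (i : Fin n) : injL S i ∘L cut hS = injL S i := by
  ext1 φ
  simp only [injL, ContinuousLinearMap.comp_apply]
  congr 1
  refine Lp.ext ?_
  filter_upwards [LpToLpRestrictCLM_coeFn (p := 1) ℂ S φ,
    LpToLpRestrictCLM_coeFn (p := 1) ℂ S (cut hS φ), ae_restrict_of_ae (cut_ae hS φ),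
    ae_restrict_mem hS] with t h1 h2 h3 h4
  rw [h1, h2, h3, indicator_of_mem h4]

lemma cut_coordL (hS : MeasurableSet S) (i : Fin n) : cut hS ∘L coordL hS i = coordL hS i := by
  ext1 f
  refine cut_of_ae hS ?_
  filter_upwards [coordL_ae hS i f] with t h1 h2
  simp [h1, h2]

lemma coordL_ext (hS : MeasurableSet S) {f g : LVec S n} (h : ∀ i, coordL hS i f = coordL hS i g) :
    f = g := by
  refine Lp.ext ((ae_restrict_iff' hS).2 ?_)
  have h1 : ∀ᵐ t, ∀ i, coordL hS i f t = S.indicator (fun t => f t i) t :=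
    ae_all_iff.2 fun i => coordL_ae hS i f
  have h2 : ∀ᵐ t, ∀ i, coordL hS i g t = S.indicator (fun t => g t i) t :=
    ae_all_iff.2 fun i => coordL_ae hS i g
  filter_upwards [h1, h2] with t h1 h2 ht
  ext i
  have := h1 i
  rw [h i, h2 i, indicator_of_mem ht, indicator_of_mem ht] at this
  exact this.symm

end Operators

/-! ### Wiener–Hopf operators on the Fourier side -/

section Toeplitz

variable {S : Set ℝ} {k m n : ℕ}

/-- `T` is the Wiener–Hopf operator on `L¹(S)` with symbol `r₀ + r`; the cases `S = [0, ∞)` and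
`S = (-∞, 0]` are `IsTP` and `IsTM`. -/
def IsT (S : Set ℝ) (r₀ : Matrix (Fin k) (Fin m) ℂ) (r : MatF k m)
    (T : LVec S m →L[ℂ] LVec S k) : Prop :=
  ∀ f : LVec S m, ⇑(T f) =ᵐ[volume.restrict S]
    fun t => r₀.mulVec (f t) + ∫ s, (r (t - s)).mulVec (f s) ∂volume.restrict S

/-- An entry of an integrable matrix function as an element of `L¹(ℝ)`. -/
def entL {r : MatF k m} (hr : IntM r) (i : Fin k) (j : Fin m) : LOne := (hr i j).toL1 _

lemma ftL_entL {r : MatF k m} (hr : IntM r) (i : Fin k) (j : Fin m) :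
    ftL (entL hr i j) = ftM r i j := ftL_toL1 (hr i j)

/-- The Fourier transform of an element of `L¹(S)ⁿ`, as a column over `ℝ → ℂ`. -/
def hatV (hS : MeasurableSet S) (f : LVec S n) : Matrix (Fin n) Unit (ℝ → ℂ) :=
  .of fun i _ => ftL (coordL hS i f)

lemma hatV_injective (hS : MeasurableSet S) :
    Function.Injective (hatV hS : LVec S n → Matrix (Fin n) Unit (ℝ → ℂ)) := fun _ _ h =>
  coordL_ext hS fun i => ftL_injective (congrFun (congrFun h i) ())

lemma hatV_add (hS : MeasurableSet S) (f g : LVec S n) : hatV hS (f + g) = hatV hS f + hatV hS g := by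
  ext1 i j
  simp [hatV]

lemma hatV_sub (hS : MeasurableSet S) (f g : LVec S n) : hatV hS (f - g) = hatV hS f - hatV hS g := by
  ext1 i j
  simp [hatV]

lemma hatV_neg (hS : MeasurableSet S) (f : LVec S n) : hatV hS (-f) = -hatV hS f := by
  ext1 i j
  simp [hatV]

lemma hatV_zero (hS : MeasurableSet S) : hatV hS (0 : LVec S n) = 0 := by
  ext1 i j
  simp [hatV]

/-- The `i`-th component of `(r₀ + r) ⋆ f` before truncation to `S`. -/
def fullL (hS : MeasurableSet S) (r₀ : Matrix (Fin k) (Fin m) ℂ) {r : MatF k m} (hr : IntM r)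
    (f : LVec S m) (i : Fin k) : LOne :=
  ∑ j, (r₀ i j • coordL hS j f + cvL (entL hr i j) (coordL hS j f))

lemma ftL_fullL (hS : MeasurableSet S) (r₀ : Matrix (Fin k) (Fin m) ℂ) {r : MatF k m}
    (hr : IntM r) (f : LVec S m) (i : Fin k) :
    ftL (fullL hS r₀ hr f i) =
      ((r₀.map (algebraMap ℂ (ℝ → ℂ)) + ftM r) * hatV hS f) i () := by
  simp only [fullL, map_sum, map_add, map_smul, ftL_cvL, ftL_entL, Matrix.mul_apply,
    Matrix.add_apply, Matrix.map_apply, add_mul, hatV, Matrix.of_apply, Algebra.smul_def]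

lemma coordL_toeplitz (hS : MeasurableSet S) {r₀ : Matrix (Fin k) (Fin m) ℂ} {r : MatF k m}
    (hr : IntM r) {T : LVec S m →L[ℂ] LVec S k} (hT : IsT S r₀ r T) (f : LVec S m) (i : Fin k) :
    coordL hS i (T f) = cut hS (fullL hS r₀ hr f i) := by
  have hf : ∀ j, Integrable (S.indicator fun t => f t j) := fun j =>
    (intL (coordL hS j f)).congr (coordL_ae hS j f)
  have hft : ∀ j, ftL (coordL hS j f) = ft (S.indicator fun t => f t j) := fun j =>
    ft_congr (coordL_ae hS j f)
  have e : ∀ᵐ t, fullL hS r₀ hr f i t = ∑ j, (r₀ i j * S.indicator (fun t => f t j) t +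
      cv (fun t => r t i j) (S.indicator fun t => f t j) t) := by
    refine ae_eq_of_ft (intL _) (integrable_finsetSum _ fun j _ =>
      ((hf j).const_mul _).add (integrable_cv (hr i j) (hf j))) ?_
    refine Eq.trans ?_ (ft_sum _ fun j =>
      ((hf j).const_mul (r₀ i j)).add (integrable_cv (hr i j) (hf j))).symm
    rw [← ftL_apply]
    simp only [fullL, map_sum, map_add, map_smul, ftL_cvL, ftL_entL, hft]
    refine Finset.sum_congr rfl fun j _ => ?_
    refine Eq.trans ?_ (ft_add ((hf j).const_mul _) (integrable_cv (hr i j) (hf j))).symm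
    rw [ft_smul, ft_cv (hr i j) (hf j)]
    rfl
  have hint : ∀ᵐ t : ℝ, ∀ i j, Integrable fun s => r (t - s) i j * S.indicator (fun t => f t j) s :=
    ae_all_iff.2 fun i => ae_all_iff.2 fun j =>
      ae_integrable_cv (f := fun t => r t i j) (hr i j) (hf j)
  refine Lp.ext ?_
  filter_upwards [coordL_ae hS i (T f), cut_ae hS (fullL hS r₀ hr f i), e, hint,
    (ae_restrict_iff' hS).1 (hT f)] with t h1 h2 h3 h4 h5
  rw [h1, h2]
  by_cases ht : t ∈ S
  swap
  · simp [ht]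
  have hind : ∀ i j, (fun s => r (t - s) i j * S.indicator (fun t => f t j) s) =
      S.indicator fun s => r (t - s) i j * f s j := fun i j => by
    ext s
    by_cases hs : s ∈ S <;> simp [hs]
  have h6 : ∀ i j, Integrable (fun s => r (t - s) i j * f s j) (volume.restrict S) :=
    fun i j => (integrable_indicator_iff hS).1 (hind i j ▸ h4 i j)
  rw [indicator_of_mem ht, indicator_of_mem ht, h5 ht, h3, Pi.add_apply,
    eval_integral fun i => by
      simp only [Matrix.mulVec, dotProduct]
      exact integrable_finsetSum _ fun j _ => h6 i j]
  simp only [Matrix.mulVec, dotProduct]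
  rw [integral_finsetSum _ fun j _ => h6 i j, Finset.sum_add_distrib]
  congr 1
  · simp [ht]
  · refine Finset.sum_congr rfl fun j _ => ?_
    rw [cv, hind, integral_indicator hS]

variable {S' : Set ℝ} {hs : ∀ x ∈ S, ∀ y ∈ S, x + y ∈ S} {hs' : ∀ x ∈ S', ∀ y ∈ S', x + y ∈ S'}

lemma ftL_mem (hS : MeasurableSet S) {φ : LOne} (h : ∀ᵐ t, t ∉ S → φ t = 0) :
    ftL φ ∈ suppRing S hs := mem_suppRing (intL φ) h hS

lemma ftL_cut_mem (hS : MeasurableSet S) (φ : LOne) : ftL (cut hS φ) ∈ suppRing S hs := by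
  refine ftL_mem hS ?_
  filter_upwards [cut_ae hS φ] with t h1 h2
  simp [h1, h2]

lemma ftL_sub_cut_mem (hS : MeasurableSet S) (hS' : MeasurableSet S') (hu : S ∪ S' = univ)
    (φ : LOne) : ftL (φ - cut hS φ) ∈ suppRing S' hs' := by
  refine ftL_mem hS' ?_
  filter_upwards [cut_ae hS φ, Lp.coeFn_sub φ (cut hS φ)] with t h1 h2 h3
  have : t ∈ S := ((mem_union _ _ _).1 (hu ▸ mem_univ t)).resolve_right h3
  rw [h2, Pi.sub_apply, h1, indicator_of_mem this, sub_self]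

lemma hatV_mem (hS : MeasurableSet S) (f : LVec S n) : EntriesIn (suppRing S hs) (hatV hS f) := by
  intro i j
  have := ftL_cut_mem (hs := hs) hS (coordL hS i f)
  rwa [← ContinuousLinearMap.comp_apply, cut_coordL] at this

/-- The part of `(r₀ + r) ⋆ f` that the truncation to `S` removes, on the Fourier side. -/
def remV (hS : MeasurableSet S) (r₀ : Matrix (Fin k) (Fin m) ℂ) {r : MatF k m} (hr : IntM r)
    (f : LVec S m) : Matrix (Fin k) Unit (ℝ → ℂ) :=
  .of fun i _ => ftL (fullL hS r₀ hr f i - cut hS (fullL hS r₀ hr f i))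

lemma remV_mem (hS : MeasurableSet S) (hS' : MeasurableSet S') (hu : S ∪ S' = univ)
    (r₀ : Matrix (Fin k) (Fin m) ℂ) {r : MatF k m} (hr : IntM r) (f : LVec S m) :
    EntriesIn (suppRing S' hs') (remV hS r₀ hr f) := fun _ _ => ftL_sub_cut_mem hS hS' hu _

lemma symbol_mul_hatV (hS : MeasurableSet S) {r₀ : Matrix (Fin k) (Fin m) ℂ} {r : MatF k m}
    (hr : IntM r) {T : LVec S m →L[ℂ] LVec S k} (hT : IsT S r₀ r T) (f : LVec S m) :
    (r₀.map (algebraMap ℂ (ℝ → ℂ)) + ftM r) * hatV hS f = hatV hS (T f) + remV hS r₀ hr f := by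
  ext1 i j
  simp only [Matrix.add_apply, hatV, remV, Matrix.of_apply, map_sub, coordL_toeplitz hS hr hT f i]
  rw [add_sub_cancel, ftL_fullL]
  rfl

end Toeplitz

/-! ### Compactness of Hankel operators -/

section Hankel

open Filter Topology

/-- Truncation to `[0, ∞)`. -/
abbrev cutIci : LOne →L[ℂ] LOne := cut (S := Ici (0 : ℝ)) measurableSet_Ici

/-- Truncation to `(-∞, 0)`. -/
abbrev cutIio : LOne →L[ℂ] LOne := cut (S := Iio (0 : ℝ)) measurableSet_Iio

/-- The Hankel operator `L¹(ℝ₋) → L¹(ℝ₊)` with symbol `φ`, seen as an operator on `L¹(ℝ)`. -/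
def hankel (φ : LOne) : LOne →L[ℂ] LOne :=
  cutIci ∘L cvL φ ∘L cutIio

/-- The symbols whose Hankel operator is compact. -/
def hankelCompact : Submodule ℂ LOne where
  carrier := {φ | IsCompactOperator (hankel φ)}
  zero_mem' := by
    have : hankel 0 = 0 := by ext1 f; simp [hankel]
    simpa [this] using! isCompactOperator_zero
  add_mem' {φ ψ} hφ hψ := by
    have : hankel (φ + ψ) = hankel φ + hankel ψ := by ext1 f; simp [hankel]
    simpa [this] using! IsCompactOperator.add hφ hψ
  smul_mem' z φ hφ := by
    have : hankel (z • φ) = z • hankel φ := by ext1 f; simp [hankel]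
    simpa [this] using! IsCompactOperator.smul hφ z

lemma isClosed_hankelCompact : IsClosed (hankelCompact : Set LOne) := by
  have hc : Continuous hankel := by unfold hankel; fun_prop
  exact isClosed_setOfPred_isCompactOperator.preimage hc

/-- The function `e^{-(k+1)t}` on `[0, ∞)`, extended by zero. -/
def expDecay (k : ℕ) : ℝ → ℂ := (Ici (0 : ℝ)).indicator fun t => ((Real.exp (-t) ^ (k + 1) : ℝ) : ℂ)

lemma integrable_exp_pow (k : ℕ) :
    Integrable ((Ici (0 : ℝ)).indicator fun t => Real.exp (-t) ^ (k + 1)) := by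
  rw [integrable_indicator_iff measurableSet_Ici, integrableOn_Ici_iff_integrableOn_Ioi]
  refine (exp_neg_integrableOn_Ioi 0 (b := k + 1) (by positivity)).congr_fun (fun t _ => ?_)
    measurableSet_Ioi
  simp only
  rw [← Real.exp_nat_mul]
  congr 1
  push_cast
  ring

lemma integrable_expDecay (k : ℕ) : Integrable (expDecay k) := by
  have := (integrable_exp_pow k).ofReal (𝕜 := ℂ)
  refine this.congr (Eventually.of_forall fun t => ?_)
  by_cases h : t ∈ Ici (0 : ℝ)
  · simp only [expDecay, indicator_of_mem h]; rfl
  · simp only [expDecay, indicator_of_notMem h]; rfl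

/-- The Hankel operator of an exponential has rank one, since
`e^{-k(t-τ)} = e^{-kt} e^{kτ}` separates the variables. -/
lemma expDecay_mem (k : ℕ) : (integrable_expDecay k).toL1 _ ∈ hankelCompact := by
  set E : LOne := (integrable_expDecay k).toL1 _ with hE
  have hEae : E =ᵐ[volume] expDecay k := (integrable_expDecay k).coeFn_toL1
  have hrank : ∀ f, hankel E f ∈ Submodule.span ℂ {E} := fun f => by
    set c : ℂ := ∫ τ, ((Real.exp τ ^ (k + 1) : ℝ) : ℂ) * (Iio (0 : ℝ)).indicator f τ with hc
    refine Submodule.mem_span_singleton.2 ⟨c, Lp.ext ?_⟩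
    have hind : Integrable ((Iio (0 : ℝ)).indicator f) := (intL f).indicator measurableSet_Iio
    have h1 : ∀ᵐ t, cvL E (cutIio f) t =
        cv (expDecay k) ((Iio (0 : ℝ)).indicator f) t := by
      refine ae_eq_of_ft (intL _) (integrable_cv (integrable_expDecay k) hind) ?_
      rw [← ftL_apply, ftL_cvL, hE, ftL_toL1, ft_cv (integrable_expDecay k) hind, ftL_apply,
        ft_congr (cut_ae measurableSet_Iio f)]
    filter_upwards [h1, cut_ae (S := Ici (0 : ℝ)) measurableSet_Ici
      (cvL E (cutIio f)), Lp.coeFn_smul c E, hEae] with t h1 h2 h3 h4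
    rw [h3, Pi.smul_apply, h4, hankel, ContinuousLinearMap.comp_apply,
      ContinuousLinearMap.comp_apply, h2]
    by_cases ht : t ∈ Ici (0 : ℝ)
    swap
    · simp [expDecay, ht]
    rw [indicator_of_mem ht, h1, cv, smul_eq_mul, mul_comm, hc, expDecay, indicator_of_mem ht,
      ← integral_const_mul]
    congr with τ
    by_cases hτ : τ ∈ Iio (0 : ℝ)
    swap
    · simp [hτ]
    have htτ : t - τ ∈ Ici (0 : ℝ) := by
      simp only [mem_Ici, mem_Iio] at ht hτ ⊢
      linarith
    rw [indicator_of_mem htτ, ← mul_assoc, ← Complex.ofReal_mul, ← mul_pow, ← Real.exp_add]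
    congr 5
    ring
  have : IsCompactOperator ((hankel E).codRestrict _ hrank) :=
    isCompactOperator_of_locallyCompactSpace_dom _
  exact this.clm_comp (Submodule.subtypeL _)

lemma poly_mem (p : Polynomial ℝ) : ∃ ψ ∈ hankelCompact, ψ =ᵐ[volume] (Ici (0 : ℝ)).indicator
    fun t => ((Real.exp (-t) * p.eval (Real.exp (-t)) : ℝ) : ℂ) := by
  induction p using Polynomial.induction_on' with
  | add p q hp hq =>
    obtain ⟨φ, hφ, eφ⟩ := hp
    obtain ⟨ψ, hψ, eψ⟩ := hq
    refine ⟨φ + ψ, add_mem hφ hψ, ?_⟩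
    filter_upwards [eφ, eψ, Lp.coeFn_add φ ψ] with t h1 h2 h3
    rw [h3, Pi.add_apply, h1, h2]
    by_cases ht : t ∈ Ici (0 : ℝ)
    · simp only [indicator_of_mem ht, Polynomial.eval_add]
      push_cast
      ring
    · simp [ht]
  | monomial k c =>
    refine ⟨(c : ℂ) • (integrable_expDecay k).toL1 _, Submodule.smul_mem _ _ (expDecay_mem k), ?_⟩
    filter_upwards [(integrable_expDecay k).coeFn_toL1,
      Lp.coeFn_smul (c : ℂ) ((integrable_expDecay k).toL1 _)] with t h1 h2
    rw [h2, Pi.smul_apply, h1, expDecay]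
    by_cases ht : t ∈ Ici (0 : ℝ)
    · simp only [indicator_of_mem ht, Polynomial.eval_monomial, smul_eq_mul]
      push_cast
      ring
    · simp [ht]

/-- After the substitution `x = e^{-t}`, a compactly supported continuous function of `t`
divided by `x` extends continuously by zero to `x = 0`; the junk values of `log` and of division
at `0` already give this extension. -/
lemma continuous_comp_log {g : ℝ → ℂ} (hg : Continuous g) (hc : HasCompactSupport g) :
    Continuous fun x : ℝ => g (-Real.log x) / x := by
  rw [continuous_iff_continuousAt]
  intro x
  by_cases hx : x = 0
  · subst hx
    have h1 : ∀ᶠ y in atTop, g y = 0 :=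
      (hasCompactSupport_iff_eventuallyEq.1 hc).filter_mono (by
        rw [coclosedCompact_eq_cocompact]
        exact atTop_le_cocompact)
    have h2 : Tendsto (fun x => -Real.log x) (𝓝[≠] 0) atTop :=
      tendsto_neg_atBot_atTop.comp Real.tendsto_log_nhdsNE_zero
    have h3 : ∀ᶠ x : ℝ in 𝓝 0, g (-Real.log x) / x = 0 := by
      have := eventually_nhdsWithin_iff.1 (h2.eventually h1)
      filter_upwards [this] with x hx
      by_cases h0 : x = 0
      · simp [h0]
      · simp [hx h0]
    exact (continuousAt_const (y := (0 : ℂ))).congr (h3.mono fun x h => h.symm)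
  · exact ((hg.continuousAt.comp (Real.continuousAt_log hx).neg)).div
      Complex.continuous_ofReal.continuousAt (by exact_mod_cast hx)

/-- Exponential polynomials approximate every function in `L¹(ℝ₊)`, by the Weierstrass theorem
in the variable `x = e^{-t}`. -/
lemma cut_mem_hankelCompact (φ : LOne) : cutIci φ ∈ hankelCompact := by
  refine isClosed_hankelCompact.closure_subset (Metric.mem_closure_iff.2 fun ε hε => ?_)
  obtain ⟨g, hgc, hgφ, hg, hgi⟩ := (intL φ).exists_hasCompactSupport_integral_sub_le
    (ε := ε / 4) (by positivity)
  have hF := continuous_comp_log hg hgc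
  set F : ℝ → ℂ := fun x => g (-Real.log x) / x with hFdef
  obtain ⟨P, hP⟩ := exists_polynomial_near_of_continuousOn 0 1 (fun x => (F x).re)
    (Complex.continuous_re.comp hF).continuousOn (ε / 4) (by positivity)
  obtain ⟨Q, hQ⟩ := exists_polynomial_near_of_continuousOn 0 1 (fun x => (F x).im)
    (Complex.continuous_im.comp hF).continuousOn (ε / 4) (by positivity)
  obtain ⟨ψ, hψ, eψ⟩ := poly_mem P
  obtain ⟨χ, hχ, eχ⟩ := poly_mem Q
  refine ⟨ψ + Complex.I • χ, add_mem hψ (Submodule.smul_mem _ _ hχ), ?_⟩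
  have hexp : Integrable ((Ici (0 : ℝ)).indicator fun t => Real.exp (-t)) := by
    simpa using integrable_exp_pow 0
  have hexp1 : ∫ t, (Ici (0 : ℝ)).indicator (fun t => Real.exp (-t)) t = 1 := by
    rw [integral_indicator measurableSet_Ici, integral_Ici_eq_integral_Ioi,
      integral_exp_neg_Ioi_zero]
  have hbound : ∀ᵐ t, ‖(cutIci φ - (ψ + Complex.I • χ)) t‖ ≤
      ‖φ t - g t‖ + ε / 2 * (Ici (0 : ℝ)).indicator (fun t => Real.exp (-t)) t := by
    filter_upwards [eψ, eχ, cut_ae (S := Ici (0 : ℝ)) measurableSet_Ici φ, Lp.coeFn_sub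
      (cutIci φ) (ψ + Complex.I • χ),
      Lp.coeFn_add ψ (Complex.I • χ), Lp.coeFn_smul Complex.I χ] with t h1 h2 h3 h4 h5 h6
    rw [h4, Pi.sub_apply, h5, Pi.add_apply, h6, Pi.smul_apply, h1, h2, h3]
    by_cases ht : t ∈ Ici (0 : ℝ)
    swap
    · simp [ht]
    simp only [indicator_of_mem ht]
    set x := Real.exp (-t) with hx
    have hx0 : 0 < x := Real.exp_pos _
    have hx1 : x ∈ Icc (0 : ℝ) 1 := ⟨hx0.le, Real.exp_le_one_iff.2 (by simpa using ht)⟩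
    have hgF : g t = x * F x := by
      have : (x : ℂ) ≠ 0 := by exact_mod_cast hx0.ne'
      simp only [hFdef]
      rw [mul_div_cancel₀ _ this, hx, Real.log_exp, neg_neg]
    have e : φ t - (((x * P.eval x : ℝ) : ℂ) + Complex.I • ((x * Q.eval x : ℝ) : ℂ)) =
        (φ t - g t) + x * (F x - (P.eval x + Complex.I * Q.eval x)) := by
      rw [hgF, smul_eq_mul]
      push_cast
      ring
    have hFx : ‖F x - (P.eval x + Complex.I * Q.eval x)‖ ≤ ε / 2 := by
      refine (Complex.norm_le_abs_re_add_abs_im _).trans ?_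
      have h7 := (hP x hx1).le
      have h8 := (hQ x hx1).le
      rw [abs_sub_comm] at h7 h8
      simp only [Complex.sub_re, Complex.add_re, Complex.ofReal_re, Complex.mul_re, Complex.I_re,
        Complex.I_im, Complex.ofReal_im, Complex.sub_im, Complex.add_im, Complex.mul_im]
      simp only [zero_mul, one_mul, mul_zero, sub_zero, add_zero, zero_add]
      linarith
    rw [e]
    refine (norm_add_le _ _).trans (add_le_add_right ?_ _)
    rw [norm_mul, Complex.norm_real, Real.norm_of_nonneg hx0.le, mul_comm]
    gcongr
  have hi : Integrable fun t => ‖φ t - g t‖ := ((intL φ).sub hgi).norm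
  rw [dist_eq_norm, L1.norm_eq_integral_norm]
  calc _ ≤ _ := integral_mono_ae (intL _).norm (hi.add (hexp.const_mul (ε / 2))) hbound
    _ = (∫ t, ‖φ t - g t‖) + ε / 2 := by
      rw [integral_add' hi (hexp.const_mul (ε / 2)), integral_const_mul, hexp1, mul_one]
    _ < ε := by linarith

/-- Hankel operators with `L¹` symbol are compact. -/
lemma isCompactOperator_hankel (φ : LOne) : IsCompactOperator (hankel φ) := by
  have h0 : hankel (φ - cutIci φ) = 0 := by
    ext1 f
    -- a convolution of two functions supported in `(-∞, 0]` is supported there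
    have h1 : ftL (cvL (φ - cutIci φ)
        (cutIio f)) ∈ ringM := by
      rw [ftL_cvL]
      refine mul_mem (ftL_sub_cut_mem _ measurableSet_Iic Ici_union_Iic _)
        (ftL_mem measurableSet_Iic ?_)
      filter_upwards [cut_ae (S := Iio (0 : ℝ)) measurableSet_Iio f] with t h1 h2
      rw [h1, indicator_of_notMem]
      exact fun h => h2 (mem_Iic.2 (le_of_lt h))
    refine Lp.ext ?_
    filter_upwards [cut_ae (S := Ici (0 : ℝ)) measurableSet_Ici
      (cvL (φ - cutIci φ)
        (cutIio f)), ae_zero_of_mem_suppRing (intL _) h1,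
      Measure.ae_ne volume 0, Lp.coeFn_zero ℂ 1 (volume : Measure ℝ)] with t h2 h3 h4 h5
    rw [hankel, ContinuousLinearMap.comp_apply, ContinuousLinearMap.comp_apply, h2,
      _root_.zero_apply, h5, Pi.zero_apply]
    by_cases ht : t ∈ Ici (0 : ℝ)
    · rw [indicator_of_mem ht, h3 fun h => h4 (le_antisymm h ht)]
    · rw [indicator_of_notMem ht]
  have h1 : φ = cutIci φ + (φ - cutIci φ) := by
    abel
  have h2 : φ - cutIci φ ∈ hankelCompact := by
    change IsCompactOperator _
    rw [h0]
    exact isCompactOperator_zero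
  have : φ ∈ hankelCompact := by
    rw [h1]
    exact add_mem (cut_mem_hankelCompact φ) h2
  exact this

end Hankel

/-! ### The operators `M₁₁` and `M₂₂` -/

/-- The Fredholm alternative for compact perturbations of the identity. -/
lemma invertible_of_compact {X : Type*} [NormedAddCommGroup X] [NormedSpace ℂ X] [CompleteSpace X]
    {T K : X →L[ℂ] X} (hK : IsCompactOperator K) (hT : T = 1 + K)
    (hinj : Function.Injective T) : InvertibleCLM T := by
  have hres : (-1 : ℂ) ∈ resolventSet ℂ K := by
    refine (hK.hasEigenvalue_or_mem_resolventSet (by norm_num : (-1 : ℂ) ≠ 0)).resolve_left ?_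
    intro h
    obtain ⟨x, hx, hx0⟩ := h.exists_hasEigenvector
    have hKx : K x = (-1 : ℂ) • x := Module.End.mem_eigenspace_iff.1 hx
    refine hx0 (hinj ?_)
    rw [map_zero, hT]
    simp [hKx]
  have hu : IsUnit T := by
    have : IsUnit (algebraMap ℂ (X →L[ℂ] X) (-1) - K) := hres
    have e : T = -(algebraMap ℂ (X →L[ℂ] X) (-1) - K) := by
      rw [hT, map_neg, map_one]
      abel
    rw [e]
    exact this.neg
  obtain ⟨u, rfl⟩ := hu
  exact ⟨↑u⁻¹, u.inv_mul, u.mul_inv⟩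

section WienerHopf

variable {S S' : Set ℝ} {hs : ∀ x ∈ S, ∀ y ∈ S, x + y ∈ S} {hs' : ∀ x ∈ S', ∀ y ∈ S', x + y ∈ S'}
  {k l m : ℕ}

/-- The product of the two Hankel operators with symbols `r` and `r'`: convolve with `r'`, keep
the part off `S`, convolve with `r`, and keep the part on `S`. -/
def hankMul (hS : MeasurableSet S) {r : MatF k l} {r' : MatF l m} (hr : IntM r) (hr' : IntM r') :
    LVec S m →L[ℂ] LVec S k :=
  ∑ i, ∑ u, ∑ j, injL S i ∘L cvL (entL hr i u) ∘L (ContinuousLinearMap.id ℂ LOne - cut hS) ∘L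
    cvL (entL hr' u j) ∘L coordL hS j

/-- Either of the two Hankel factors being compact makes the product compact. -/
lemma isCompactOperator_hankMul (hS : MeasurableSet S)
    (hc : (∀ φ, IsCompactOperator
        (cut hS ∘L cvL φ ∘L (ContinuousLinearMap.id ℂ LOne - cut hS))) ∨
      ∀ φ, IsCompactOperator ((ContinuousLinearMap.id ℂ LOne - cut hS) ∘L cvL φ ∘L cut hS))
    {r : MatF k l} {r' : MatF l m} (hr : IntM r) (hr' : IntM r') :
    IsCompactOperator (hankMul hS hr hr') := by
  change hankMul hS hr hr' ∈ compactOperator (RingHom.id ℂ) (LVec S m) (LVec S k)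
  refine sum_mem fun i _ => sum_mem fun u _ => sum_mem fun j _ => ?_
  change IsCompactOperator _
  rcases hc with hc | hc
  · rw [← injL_cut hS]
    exact ((hc (entL hr i u)).comp_clm (cvL (entL hr' u j) ∘L coordL hS j)).clm_comp (injL S i)
  · rw [← cut_coordL hS j]
    exact ((hc (entL hr' u j)).comp_clm (coordL hS j)).clm_comp (injL S i ∘L cvL (entL hr i u))

/-- On the Fourier side the product of Hankel operators is the `S`-part of `r` times the
remainder of `r'`. -/
lemma mul_remV (hS : MeasurableSet S) (hS' : MeasurableSet S') (hu : S ∪ S' = univ)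
    {r : MatF k l} {r' : MatF l m} (hr : IntM r) (hr' : IntM r') (r₀ : Matrix (Fin l) (Fin m) ℂ)
    (f : LVec S m) : ∃ W, EntriesIn (suppRing S' hs') W ∧
      ftM r * remV hS r₀ hr' f = hatV hS (hankMul hS hr hr' f) + W := by
  set X : Fin k → LOne := fun i =>
    ∑ u, cvL (entL hr i u) (fullL hS r₀ hr' f u - cut hS (fullL hS r₀ hr' f u)) with hX
  have hcut : ∀ j, cut hS (coordL hS j f) = coordL hS j f := fun j => by
    rw [← ContinuousLinearMap.comp_apply, cut_coordL]
  have hco : ∀ i, coordL hS i (hankMul hS hr hr' f) = cut hS (X i) := fun i => by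
    simp only [hankMul, _root_.sum_apply, ContinuousLinearMap.comp_apply, map_sum,
      coordL_injL, hX, fullL, map_add, map_smul, hcut, _root_.sub_apply,
      ContinuousLinearMap.id_apply, map_sub, Finset.sum_add_distrib]
    rw [Finset.sum_eq_single i (fun i' _ h => by simp [h.symm]) (by simp)]
    refine Finset.sum_congr rfl fun u _ => ?_
    simp only [if_true, Finset.sum_sub_distrib]
    abel
  refine ⟨.of fun i _ => ftL (X i - cut hS (X i)), fun i _ => ftL_sub_cut_mem hS hS' hu _, ?_⟩
  ext1 i j
  simp only [Matrix.add_apply, hatV, Matrix.of_apply, hco, map_sub, add_sub_cancel, hX, map_sum,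
    ftL_cvL, ftL_entL, Matrix.mul_apply, remV, mul_sub]

variable {p q : ℕ} {a : MatF p p} {b : MatF p q}

lemma one_symbol (r : MatF p p) :
    (1 : Matrix (Fin p) (Fin p) ℂ).map (algebraMap ℂ (ℝ → ℂ)) + ftM r = 1 + ftM r := by
  simp [Matrix.map_one]

lemma zero_symbol (r : MatF k l) :
    (0 : Matrix (Fin k) (Fin l) ℂ).map (algebraMap ℂ (ℝ → ℂ)) + ftM r = ftM r := by
  simp [Matrix.map_zero]

/-- A Wiener–Hopf operator whose symbol is `1 + r`, with `r` supported in `S`, is a plain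
multiplication on the Fourier side. -/
lemma one_add_mul_hatV (hS : MeasurableSet S) (hS' : MeasurableSet S') (hu : S ∪ S' = univ)
    (hp : StarPair (suppRing S hs) (suppRing S' hs')) {r : MatF p p} (hr : IntM r)
    (hm : EntriesIn (suppRing S hs) (ftM r)) {T : LVec S p →L[ℂ] LVec S p} (hT : IsT S 1 r T)
    (f : LVec S p) : (1 + ftM r) * hatV hS f = hatV hS (T f) := by
  have h := symbol_mul_hatV hS hr hT f
  rw [one_symbol] at h
  refine (hp.unique ?_ (hatV_mem hS _) EntriesIn.zero (remV_mem hS hS' hu 1 hr f)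
    ((add_zero _).trans h)).1
  rw [Matrix.add_mul, Matrix.one_mul]
  exact (hatV_mem hS f).add (hm.mul (hatV_mem hS f))

lemma mul_hatV (hS : MeasurableSet S) (hS' : MeasurableSet S') (hu : S ∪ S' = univ)
    (hp : StarPair (suppRing S hs) (suppRing S' hs')) {r : MatF k l} (hr : IntM r)
    (hm : EntriesIn (suppRing S hs) (ftM r)) {T : LVec S l →L[ℂ] LVec S k} (hT : IsT S 0 r T)
    (f : LVec S l) : ftM r * hatV hS f = hatV hS (T f) := by
  have h := symbol_mul_hatV hS hr hT f
  rw [zero_symbol] at h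
  exact (hp.unique (hm.mul (hatV_mem hS f)) (hatV_mem hS _) EntriesIn.zero
    (remV_mem hS hS' hu 0 hr f) ((add_zero _).trans h)).1

variable {Tα Tαs : LVec S p →L[ℂ] LVec S p} {Tβ : LVec S q →L[ℂ] LVec S p}
  {Tβs : LVec S p →L[ℂ] LVec S q}

/-- `MRel` describes the operator `M₁₁` (or `M₂₂`) on the Fourier side. -/
lemma mrel_hatV (hS : MeasurableSet S) (hS' : MeasurableSet S') (hu : S ∪ S' = univ)
    (hp : StarPair (suppRing S hs) (suppRing S' hs')) (ia : IntM a) (ib : IntM b)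
    (ha : EntriesIn (suppRing S hs) (ftM a)) (hb : EntriesIn (suppRing S hs) (ftM b))
    (hα : IsT S 1 a Tα) (hαs : IsT S 1 (adjF a) Tαs) (hβ : IsT S 0 b Tβ)
    (hβs : IsT S 0 (adjF b) Tβs) (f : LVec S p) :
    MRel (suppRing S hs) (suppRing S' hs') (ftM a) (ftM b) (hatV hS f)
      (hatV hS ((Tα.comp Tαs - Tβ.comp Tβs) f)) := by
  refine ⟨hatV hS (Tαs f), hatV hS (Tβs f), remV hS 1 ia.adj f, remV hS 0 ib.adj f,
    hatV_mem hS _, hatV_mem hS _, remV_mem hS hS' hu _ _ _, remV_mem hS hS' hu _ _ _, ?_, ?_, ?_⟩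
  · rw [← ftM_adj, ← one_symbol, symbol_mul_hatV hS ia.adj hαs]
  · rw [← ftM_adj, ← symbol_mul_hatV hS ib.adj hβs, zero_symbol]
  · rw [one_add_mul_hatV hS hS' hu hp ia ha hα, mul_hatV hS hS' hu hp ib hb hβ, ← hatV_sub]
    rfl

/-- Because `αα* - ββ* = 1`, the operator `M₁₁` differs from the identity by products of Hankel
operators. -/
lemma eq_one_add_hankMul (hS : MeasurableSet S) (hS' : MeasurableSet S') (hu : S ∪ S' = univ)
    (hp : StarPair (suppRing S hs) (suppRing S' hs')) (ia : IntM a) (ib : IntM b)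
    (ha : EntriesIn (suppRing S hs) (ftM a)) (hb : EntriesIn (suppRing S hs) (ftM b))
    (hα : IsT S 1 a Tα) (hαs : IsT S 1 (adjF a) Tαs) (hβ : IsT S 0 b Tβ)
    (hβs : IsT S 0 (adjF b) Tβs)
    (hone : (1 + ftM a) * (1 + (ftM a)ᴴ) - ftM b * (ftM b)ᴴ = 1) :
    Tα.comp Tαs - Tβ.comp Tβs = 1 + (hankMul hS ib ib.adj - hankMul hS ia ia.adj) := by
  ext1 f
  refine hatV_injective hS ?_
  obtain ⟨W₁, hW₁, e₁⟩ := mul_remV (hs' := hs') hS hS' hu ia ia.adj 1 f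
  obtain ⟨W₂, hW₂, e₂⟩ := mul_remV (hs' := hs') hS hS' hu ib ib.adj 0 f
  have d₁ := symbol_mul_hatV hS ia.adj hαs f
  have d₂ := symbol_mul_hatV hS ib.adj hβs f
  rw [one_symbol, ftM_adj] at d₁
  rw [zero_symbol, ftM_adj] at d₂
  have c₁ := one_add_mul_hatV hS hS' hu hp ia ha hα (Tαs f)
  have c₂ := mul_hatV hS hS' hu hp ib hb hβ (Tβs f)
  have key : hatV hS ((Tα.comp Tαs - Tβ.comp Tβs) f) + 0 =
      hatV hS ((1 + (hankMul hS ib ib.adj - hankMul hS ia ia.adj)) f) +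
        (W₂ - W₁ - remV hS 1 ia.adj f) := by
    have h1 : (Tα.comp Tαs - Tβ.comp Tβs) f = Tα (Tαs f) - Tβ (Tβs f) := rfl
    have h2 : (1 + (hankMul hS ib ib.adj - hankMul hS ia ia.adj)) f =
      f + (hankMul hS ib ib.adj f - hankMul hS ia ia.adj f) := rfl
    rw [h1, h2, hatV_add, hatV_sub, hatV_sub, ← c₁, ← c₂, eq_sub_of_add_eq d₁.symm,
      eq_sub_of_add_eq d₂.symm, eq_sub_of_add_eq e₁.symm, eq_sub_of_add_eq e₂.symm]
    have h3 : hatV hS f = ((1 + ftM a) * (1 + (ftM a)ᴴ) - ftM b * (ftM b)ᴴ) * hatV hS f := by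
      rw [hone, Matrix.one_mul]
    rw [Matrix.sub_mul, Matrix.mul_assoc, Matrix.mul_assoc] at h3
    rw [Matrix.mul_sub, Matrix.mul_sub, Matrix.add_mul 1 (ftM a) (remV hS 1 ia.adj f),
      Matrix.one_mul]
    nth_rewrite 3 [h3]
    abel
  exact (hp.unique (hatV_mem hS _) (hatV_mem hS _) EntriesIn.zero
    ((hW₂.sub hW₁).sub (remV_mem hS hS' hu _ _ _)) key).1

lemma cut_congr {R : Set ℝ} (hS : MeasurableSet S) (hR : MeasurableSet R)
    (h : ∀ᵐ t, t ∈ S ↔ t ∈ R) : cut hS = cut hR := by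
  ext1 f
  refine Lp.ext ?_
  filter_upwards [cut_ae hS f, cut_ae hR f, h] with t h1 h2 h3
  rw [h1, h2]
  by_cases ht : t ∈ S
  · rw [indicator_of_mem ht, indicator_of_mem (h3.1 ht)]
  · rw [indicator_of_notMem ht, indicator_of_notMem (mt h3.2 ht)]

lemma id_sub_cut (hS : MeasurableSet S) :
    ContinuousLinearMap.id ℂ LOne - cut hS = cut hS.compl := by
  ext1 f
  refine Lp.ext ?_
  filter_upwards [cut_ae hS f, cut_ae hS.compl f, Lp.coeFn_sub f (cut hS f)] with t h1 h2 h3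
  rw [_root_.sub_apply, ContinuousLinearMap.id_apply, h3, Pi.sub_apply, h1, h2]
  by_cases ht : t ∈ S <;> simp [ht]

lemma compact_Ici (φ : LOne) : IsCompactOperator
    (cut (S := Ici (0 : ℝ)) measurableSet_Ici ∘L cvL φ ∘L
      (ContinuousLinearMap.id ℂ LOne - cut (S := Ici (0 : ℝ)) measurableSet_Ici)) := by
  rw [id_sub_cut, cut_congr (measurableSet_Ici (a := (0 : ℝ))).compl (measurableSet_Iio (a := (0 : ℝ)))
    (by simp)]
  exact isCompactOperator_hankel φ

lemma compact_Iic (φ : LOne) : IsCompactOperator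
    ((ContinuousLinearMap.id ℂ LOne - cut (S := Iic (0 : ℝ)) measurableSet_Iic) ∘L cvL φ ∘L
      cut (S := Iic (0 : ℝ)) measurableSet_Iic) := by
  have h1 : cut (S := Iic (0 : ℝ)) measurableSet_Iic = cutIio := by
    refine cut_congr _ _ ?_
    filter_upwards [Measure.ae_ne volume 0] with t ht
    exact ⟨fun h => lt_of_le_of_ne h ht, fun h => mem_Iic.2 (le_of_lt h)⟩
  have h2 : cut (measurableSet_Iic (a := (0 : ℝ))).compl = cutIci := by
    refine cut_congr _ _ ?_
    filter_upwards [Measure.ae_ne volume 0] with t ht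
    simp only [mem_compl_iff, mem_Iic, not_le, mem_Ici]
    exact ⟨le_of_lt, fun h => lt_of_le_of_ne h ht.symm⟩
  rw [id_sub_cut, h2, h1]
  exact isCompactOperator_hankel φ

end WienerHopf

/-! ### Solving the inverse problem -/

section Solve

variable {S S' : Set ℝ} {hs : ∀ x ∈ S, ∀ y ∈ S, x + y ∈ S} {hs' : ∀ x ∈ S', ∀ y ∈ S', x + y ∈ S'}
  {n p q : ℕ}

lemma exists_hatV (hS : MeasurableSet S) {w : Matrix (Fin n) Unit (ℝ → ℂ)}
    (hw : EntriesIn (suppRing S hs) w) : ∃ f : LVec S n, hatV hS f = w := by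
  choose φ hφ hφ0 e using fun i => hw i ()
  refine ⟨∑ j, injL S j ((hφ j).toL1 _), ?_⟩
  ext1 i u
  have hcut : cut hS ((hφ i).toL1 _) = (hφ i).toL1 _ := by
    refine cut_of_ae hS ?_
    filter_upwards [(hφ i).coeFn_toL1] with t h1 h2
    rw [h1, hφ0 i t h2]
  simp only [hatV, Matrix.of_apply, map_sum, coordL_injL, apply_ite ftL, map_zero]
  rw [Finset.sum_ite_eq, if_pos (Finset.mem_univ i), hcut, ftL_toL1, e]

/-- The Fourier transform of a column, computed from a representative in `L¹(S)ⁿ`. -/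
lemma hatV_of_ae (hS : MeasurableSet S) {g : MatF n q} (h0 : ∀ᵐ t, t ∉ S → g t = 0) {j : Fin q}
    {f : LVec S n} (hf : ⇑f =ᵐ[volume.restrict S] colF g j) : hatV hS f = colM (ftM g) j := by
  ext1 i u
  refine ft_congr ?_
  filter_upwards [coordL_ae hS i f, h0, (ae_restrict_iff' hS).1 hf] with t h1 h2 h3
  rw [h1]
  by_cases ht : t ∈ S
  · rw [indicator_of_mem ht, h3 ht]
    rfl
  · rw [indicator_of_notMem ht, h2 ht]
    rfl

section Represented

variable {T : LVec S p →L[ℂ] LVec S p} {a : Matrix (Fin p) (Fin p) (ℝ → ℂ)}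
  {b : Matrix (Fin p) (Fin q) (ℝ → ℂ)} {κ : Type*}

/-- If `M₁₁ g = -k` on the Fourier side, then `T` maps the columns of `g` to those of `-k`. -/
lemma apply_eq_of_mrel (hS : MeasurableSet S)
    (hp : StarPair (suppRing S hs) (suppRing S' hs'))
    (hT : ∀ f, MRel (suppRing S hs) (suppRing S' hs') a b (hatV hS f) (hatV hS (T f)))
    {g k : MatF p n} (hg : ∀ᵐ t, t ∉ S → g t = 0) (hk : ∀ᵐ t, t ∉ S → k t = 0)
    (hr : MRel (suppRing S hs) (suppRing S' hs') a b (ftM g) (-ftM k)) {j : Fin n}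
    {f h : LVec S p} (hf : ⇑f =ᵐ[volume.restrict S] colF g j)
    (hh : ⇑h =ᵐ[volume.restrict S] colF k j) : T f = -h := by
  refine hatV_injective hS ((hT f).unique hp ?_)
  rw [hatV_neg, hatV_of_ae hS hg hf, hatV_of_ae hS hk hh]
  exact hr.col j

lemma mrel_injective (hS : MeasurableSet S)
    (hp : StarPair (suppRing S hs) (suppRing S' hs'))
    (hT : ∀ f, MRel (suppRing S hs) (suppRing S' hs') a b (hatV hS f) (hatV hS (T f)))
    (hinj : Function.Injective T) {x x' k : Matrix (Fin p) κ (ℝ → ℂ)}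
    (hx : EntriesIn (suppRing S hs) x) (hx' : EntriesIn (suppRing S hs) x')
    (hr : MRel (suppRing S hs) (suppRing S' hs') a b x k)
    (hr' : MRel (suppRing S hs) (suppRing S' hs') a b x' k) : x = x' := by
  refine colM_ext fun j => ?_
  obtain ⟨f, hf⟩ := exists_hatV hS (w := colM x j) fun i _ => hx i j
  obtain ⟨f', hf'⟩ := exists_hatV hS (w := colM x' j) fun i _ => hx' i j
  have e : hatV hS (T f) = colM k j := (hf ▸ hT f).unique hp (hr.col j)
  have e' : hatV hS (T f') = colM k j := (hf' ▸ hT f').unique hp (hr'.col j)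
  rw [← hf, ← hf', hinj (hatV_injective hS (e.trans e'.symm))]

lemma mrel_surjective (hS : MeasurableSet S)
    (hT : ∀ f, MRel (suppRing S hs) (suppRing S' hs') a b (hatV hS f) (hatV hS (T f)))
    (hsurj : Function.Surjective T) {k : Matrix (Fin p) κ (ℝ → ℂ)}
    (hk : EntriesIn (suppRing S hs) k) :
    ∃ x, EntriesIn (suppRing S hs) x ∧ MRel (suppRing S hs) (suppRing S' hs') a b x k := by
  have : ∀ j, ∃ f : LVec S p, hatV hS (T f) = colM k j := fun j => by
    obtain ⟨h, hh⟩ := exists_hatV hS (w := colM k j) fun i _ => hk i j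
    obtain ⟨f, rfl⟩ := hsurj h
    exact ⟨f, hh⟩
  choose f hf using this
  refine ⟨.of fun i j => hatV hS (f j) i (), fun i j => hatV_mem hS (f j) i (),
    MRel.of_col fun j => ?_⟩
  rw [← hf j]
  exact hT (f j)

end Represented

lemma InvertibleCLM.surjective {X Y : Type*} [NormedAddCommGroup X] [NormedSpace ℂ X]
    [NormedAddCommGroup Y] [NormedSpace ℂ Y] {T : X →L[ℂ] Y} (h : InvertibleCLM T) :
    Function.Surjective T := fun y => by
  obtain ⟨R, -, hR⟩ := h
  exact ⟨R y, DFunLike.congr_fun hR y⟩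

lemma exists_L1Plus {X : Matrix (Fin p) (Fin q) (ℝ → ℂ)} (hX : EntriesIn ringP X) :
    ∃ g : MatF p q, L1Plus g ∧ ftM g = X := by
  choose φ hφ hφ0 e using hX
  refine ⟨fun t => .of fun i j => φ i j t, ⟨hφ, fun t ht => ?_⟩, ?_⟩
  · ext i j
    exact hφ0 i j t (by simpa using ht)
  · ext1 i j
    exact e i j

lemma L1Plus.ae_zero {g : MatF p q} (h : L1Plus g) : ∀ᵐ t, t ∉ Ici (0 : ℝ) → g t = 0 :=
  .of_forall fun t ht => h.2 t (by simpa using ht)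

lemma L1Minus.ae_zero {g : MatF p q} (h : L1Minus g) : ∀ᵐ t, t ∉ Iic (0 : ℝ) → g t = 0 :=
  .of_forall fun t ht => h.2 t (by simpa using ht)

lemma L1Plus.adj {g : MatF p q} (h : L1Plus g) : L1Minus (adjF g) :=
  ⟨IntM.adj h.1, fun t ht => by rw [adjF, h.2 _ (by simpa using ht), conjTranspose_zero]⟩

end Solve

/-- Theorem 1.2, sufficiency part: existence, uniqueness and formulas
for the solution of the twofold Ellis–Gohberg inverse problem. -/
theorem stmt4 {p q : ℕ}
    (a : MatF p p) (b : MatF p q) (c : MatF q p) (d : MatF q q)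
    (ha : L1Plus a) (hb : L1Plus b) (hc : L1Minus c) (hd : L1Minus d)
    (Tpα : L1P p →L[ℂ] L1P p) (hTpα : IsTP 1 a Tpα)
    (Tpαs : L1P p →L[ℂ] L1P p) (hTpαs : IsTP 1 (adjF a) Tpαs)
    (Tpβ : L1P q →L[ℂ] L1P p) (hTpβ : IsTP 0 b Tpβ)
    (Tpβs : L1P p →L[ℂ] L1P q) (hTpβs : IsTP 0 (adjF b) Tpβs)
    (Tmδ : L1M q →L[ℂ] L1M q) (hTmδ : IsTM 1 d Tmδ)
    (Tmδs : L1M q →L[ℂ] L1M q) (hTmδs : IsTM 1 (adjF d) Tmδs)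
    (Tmγ : L1M p →L[ℂ] L1M q) (hTmγ : IsTM 0 c Tmγ)
    (Tmγs : L1M q →L[ℂ] L1M p) (hTmγs : IsTM 0 (adjF c) Tmγs)
    (hL1 : CondL1 a b c d)
    (hinj11 : Function.Injective (Tpα.comp Tpαs - Tpβ.comp Tpβs))
    (hinj22 : Function.Injective (Tmδ.comp Tmδs - Tmγ.comp Tmγs)) :
    InvertibleCLM (Tpα.comp Tpαs - Tpβ.comp Tpβs) ∧
    InvertibleCLM (Tmδ.comp Tmδs - Tmγ.comp Tmγs) ∧
    (∃ g : MatF p q, L1Plus g ∧ EGSol a b c d g) ∧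
    (∀ g g' : MatF p q, L1Plus g → EGSol a b c d g → L1Plus g' → EGSol a b c d g' →
      ∀ᵐ t ∂(volume : Measure ℝ), g t = g' t) ∧
    (∀ g : MatF p q, L1Plus g → EGSol a b c d g →
      (∀ j : Fin q, ∀ fg fb : L1P p, ⇑fg =ᵐ[μP] colF g j → ⇑fb =ᵐ[μP] colF b j →
        (Tpα.comp Tpαs - Tpβ.comp Tpβs) fg = -fb) ∧
      (∀ j : Fin p, ∀ fgs fc : L1M q, ⇑fgs =ᵐ[μM] colF (adjF g) j →
        ⇑fc =ᵐ[μM] colF c j → (Tmδ.comp Tmδs - Tmγ.comp Tmγs) fgs = -fc)) := by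
  have D := egData ha hb hc hd hL1
  have ia : IntM a := ha.1
  have ib : IntM b := hb.1
  have ic : IntM c := hc.1
  have id : IntM d := hd.1
  have R₁ : ∀ f : L1P p, MRel ringP ringM (ftM a) (ftM b) (hatV measurableSet_Ici f)
      (hatV measurableSet_Ici ((Tpα.comp Tpαs - Tpβ.comp Tpβs) f)) :=
    mrel_hatV measurableSet_Ici measurableSet_Iic Ici_union_Iic starPair ia ib D.ha D.hb
      hTpα hTpαs hTpβ hTpβs
  have R₂ : ∀ f : L1M q, MRel ringM ringP (ftM d) (ftM c) (hatV measurableSet_Iic f)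
      (hatV measurableSet_Iic ((Tmδ.comp Tmδs - Tmγ.comp Tmγs) f)) :=
    mrel_hatV measurableSet_Iic measurableSet_Ici Iic_union_Ici starPair.symm id ic D.hd D.hc
      hTmδ hTmδs hTmγ hTmγs
  have I₁ : InvertibleCLM (Tpα.comp Tpαs - Tpβ.comp Tpβs) :=
    invertible_of_compact ((isCompactOperator_hankMul _ (.inl compact_Ici) ib ib.adj).sub
      (isCompactOperator_hankMul _ (.inl compact_Ici) ia ia.adj))
      (eq_one_add_hankMul measurableSet_Ici measurableSet_Iic Ici_union_Iic starPair ia ib D.ha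
        D.hb hTpα hTpαs hTpβ hTpβs D.transposed.1) hinj11
  have I₂ : InvertibleCLM (Tmδ.comp Tmδs - Tmγ.comp Tmγs) :=
    invertible_of_compact ((isCompactOperator_hankMul _ (.inr compact_Iic) ic ic.adj).sub
      (isCompactOperator_hankMul _ (.inr compact_Iic) id id.adj))
      (eq_one_add_hankMul measurableSet_Iic measurableSet_Ici Iic_union_Ici starPair.symm id ic
        D.hd D.hc hTmδ hTmδs hTmγ hTmγs D.transposed.2.2.2) hinj22
  have MR : ∀ {g : MatF p q}, L1Plus g → EGSol a b c d g →
      MRel ringP ringM (ftM a) (ftM b) (ftM g) (-ftM b) ∧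
      MRel ringM ringP (ftM d) (ftM c) (ftM (adjF g)) (-ftM c) := by
    intro g hg hsol
    obtain ⟨h1, h2, h3, h4⟩ := (egSol_iff ia ib ic id hg.1).1 hsol
    refine ⟨D.mrel_of_sol h2 h3, D.swap.mrel_of_sol ?_ ?_⟩
    · rwa [ftM_adj, conjTranspose_conjTranspose]
    · rwa [ftM_adj, conjTranspose_conjTranspose]
  have zero_rel : ∀ {k l : ℕ} {P M : NonUnitalSubring (ℝ → ℂ)}
      (u : Matrix (Fin k) (Fin k) (ℝ → ℂ)) (v : Matrix (Fin k) (Fin l) (ℝ → ℂ)),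
      MRel P M u v (0 : Matrix (Fin k) Unit (ℝ → ℂ)) 0 := fun u v =>
    ⟨0, 0, 0, 0, EntriesIn.zero, EntriesIn.zero, EntriesIn.zero, EntriesIn.zero, by simp, by simp,
      by simp⟩
  refine ⟨I₁, I₂, ?_, ?_, ?_⟩
  · obtain ⟨G, hG, rG⟩ := mrel_surjective measurableSet_Ici R₁ I₁.surjective D.hb.neg
    obtain ⟨H, hH, rH⟩ := mrel_surjective measurableSet_Iic R₂ I₂.surjective D.hc.neg
    obtain ⟨s2, s3⟩ := D.sol_of_mrel (fun w hw hw0 => mrel_injective measurableSet_Iic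
      starPair.symm R₂ hinj22 hw EntriesIn.zero hw0 (zero_rel _ _)) rG
    obtain ⟨s4, s1⟩ := D.swap.sol_of_mrel (fun w hw hw0 => mrel_injective measurableSet_Ici
      starPair R₁ hinj11 hw EntriesIn.zero hw0 (zero_rel _ _)) rH
    have e : G = Hᴴ := D.eq_of_halves hG hH s2 s3 s4 s1
    rw [← e] at s4 s1
    obtain ⟨g, hg, rfl⟩ := exists_L1Plus hG
    exact ⟨g, hg, (egSol_iff ia ib ic id hg.1).2 ⟨s1, s2, s3, s4⟩⟩
  · intro g g' hg hsol hg' hsol'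
    exact ae_eq_of_ftM hg.1 hg'.1 (mrel_injective measurableSet_Ici starPair R₁ hinj11 hg.mem
      hg'.mem (MR hg hsol).1 (MR hg' hsol').1)
  · intro g hg hsol
    exact ⟨fun j fg fb hfg hfb => apply_eq_of_mrel measurableSet_Ici starPair R₁ hg.ae_zero
      hb.ae_zero (MR hg hsol).1 hfg hfb, fun j fgs fc hfgs hfc => apply_eq_of_mrel
      measurableSet_Iic starPair.symm R₂ hg.adj.ae_zero hc.ae_zero (MR hg hsol).2 hfgs hfc⟩
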